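/- Let p₀,p₁,p₂,p₃ ∈ ℝ³ span a small simplex S that contains its own circumcenter, with edge lengths y₁ = |p₀−p₁|, y₂ = |p₀−p₂|, y₃ = |p₀−p₃|, y₄ = |p₂−p₃|, y₅ = |p₁−p₃|, y₆ = |p₁−p₂|. Write L = [2.51, 2√2] and I = [2, 2.51]. Suppose one of the following holds: (1) y₁,y₅ ∈ L and y₂,y₃,y₄,y₆ ∈ I; (2) y₁,y₅,y₆ ∈ L and y₂,y₃,y₄ ∈ I; (3) y₄,y₅ ∈ L and y₁,y₂,y₃,y₆ ∈ I; (4) y₄,y₅,y₆ ∈ L and y₁,y₂,y₃ ∈ I. Then vor(S) < 0. -/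

import Mathlib

open MeasureTheory Real

noncomputable section

abbrev E3 : Type := EuclideanSpace ℝ (Fin 3)

/-- The density of the regular octahedron. -/
def δoct : ℝ := (-3 * π + 12 * arccos (1 / Real.sqrt 3)) / Real.sqrt 8

/-- The circumradius `η(a,b,c)` of a triangle with side lengths `a`, `b`, `c`. -/
def eta (a b c : ℝ) : ℝ :=
  a * b * c / Real.sqrt ((a + b + c) * (b + c - a) * (a + c - b) * (a + b - c))

/-- A simplex is small if all six edge lengths are at least `2` and each of the
four triangular faces has circumradius at most `√2`. -/
def IsSmall (p₀ p₁ p₂ p₃ : E3) : Prop :=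
  (2 ≤ dist p₀ p₁ ∧ 2 ≤ dist p₀ p₂ ∧ 2 ≤ dist p₀ p₃ ∧
    2 ≤ dist p₁ p₂ ∧ 2 ≤ dist p₁ p₃ ∧ 2 ≤ dist p₂ p₃) ∧
  eta (dist p₀ p₁) (dist p₀ p₂) (dist p₁ p₂) ≤ Real.sqrt 2 ∧
  eta (dist p₀ p₁) (dist p₀ p₃) (dist p₁ p₃) ≤ Real.sqrt 2 ∧
  eta (dist p₀ p₂) (dist p₀ p₃) (dist p₂ p₃) ≤ Real.sqrt 2 ∧
  eta (dist p₁ p₂) (dist p₁ p₃) (dist p₂ p₃) ≤ Real.sqrt 2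

/-- `S = conv {p₀, p₁, p₂, p₃}` contains its own circumcenter. -/
def ContainsCircumcenter (p₀ p₁ p₂ p₃ : E3) : Prop :=
  ∃ c ∈ convexHull ℝ ({p₀, p₁, p₂, p₃} : Set E3),
    dist c p₀ = dist c p₁ ∧ dist c p₀ = dist c p₂ ∧ dist c p₀ = dist c p₃

/-- The Voronoi score of the simplex `S = conv {p₀, p₁, p₂, p₃}` at the vertex `p₀`:
`vor(S) = 4·(-δ_oct · vol {x ∈ S : |x-p₀| ≤ |x-pⱼ|, j = 1,2,3} + vol (B(p₀,1) ∩ C(S)))`,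
where `C(S)` is the cone over `S` with apex `p₀`. -/
def vor (p₀ p₁ p₂ p₃ : E3) : ℝ :=
  4 * (-δoct * (volume {x ∈ convexHull ℝ ({p₀, p₁, p₂, p₃} : Set E3) |
        dist x p₀ ≤ dist x p₁ ∧ dist x p₀ ≤ dist x p₂ ∧ dist x p₀ ≤ dist x p₃}).toReal +
      (volume (Metric.closedBall p₀ 1 ∩
        {y : E3 | ∃ x ∈ convexHull ℝ ({p₀, p₁, p₂, p₃} : Set E3), ∃ t : ℝ, 0 ≤ t ∧
          y = p₀ + t • (x - p₀)})).toReal)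

/-!
Both volumes in the score are computed by splitting the simplex from its circumcenter `q` into
orthoschemes at `p₀`, each spanned by `p₀`, the midpoint of an edge, the circumcenter of a face and
`q`. An orthoscheme whose vertices have squared distances at least `1`, `1 + β`, `1 + γ` from `p₀`
is filled by the unit ball to density at most `rogersDensity β γ`, and `rogersDensity (1 / 3) 1` is
exactly `δoct`: a face has squared circumradius at least `4 / 3`, so no orthoscheme is denser than
the octahedron once the squared circumradius `R²` of the simplex is at least `2`.

Two long edges force `R² ≥ 1.87` and squared circumradius at least `1.64` on two of the faces at
`p₀`, so the orthoschemes over these faces have density below `δoct`. If `R² < 2`, those over the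
third face can be denser, but they occupy a share of the volume proportional to the barycentric
weight `a` of `q` at the vertex opposite to that face. Writing `q - p₀ = a A + b B + c C` in the
edges at `p₀`, one has `a ‖A - C‖² + b ‖B - C‖² + (1 - a - b - c) ‖C‖² = 2 R²`, and since `A - C`
is long this bounds `a` well enough for the average density to stay below `δoct`.
-/

/-! ### Volumes of truncated cones -/

section TruncatedCone

variable {F : Type*} [NormedAddCommGroup F] [NormedSpace ℝ F]

/-- The points `(r, r • x)` with `x ∈ Ω` and `0 < r ≤ ρ x`: the cone over `{1} × Ω`, cut off
along the ray through `(1, x)` at height `ρ x`. -/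
def truncatedCone (Ω : Set F) (ρ : F → ℝ) : Set (ℝ × F) :=
  {p | 0 < p.1 ∧ p.1⁻¹ • p.2 ∈ Ω ∧ p.1 ≤ ρ (p.1⁻¹ • p.2)}

open scoped Pointwise in
lemma preimage_mk_truncatedCone {r : ℝ} (hr : 0 < r) (Ω : Set F) (ρ : F → ℝ) :
    Prod.mk r ⁻¹' truncatedCone Ω ρ = r • (Ω ∩ {x | r ≤ ρ x}) := by
  ext x
  rw [Set.mem_smul_set_iff_inv_smul_mem₀ hr.ne']
  simp [truncatedCone, hr]

variable [FiniteDimensional ℝ F] [MeasurableSpace F] [BorelSpace F]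

lemma measurableSet_truncatedCone {Ω : Set F} (hΩ : MeasurableSet Ω) {ρ : F → ℝ}
    (hρ : Measurable ρ) : MeasurableSet (truncatedCone Ω ρ) := by
  have hproj : Measurable fun p : ℝ × F ↦ p.1⁻¹ • p.2 := measurable_fst.inv.smul measurable_snd
  exact (measurableSet_lt measurable_const measurable_fst).inter
    ((hproj hΩ).inter (measurableSet_le measurable_fst (hρ.comp hproj)))

lemma measure_preimage_mk_truncatedCone (μ : Measure F) [μ.IsAddHaarMeasure] (Ω : Set F)
    {ρ : F → ℝ} (hρ : Measurable ρ) (r : ℝ) :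
    μ (Prod.mk r ⁻¹' truncatedCone Ω ρ) =
      ∫⁻ x in Ω, (Set.Ioc 0 (ρ x)).indicator
        (fun s ↦ ENNReal.ofReal (s ^ Module.finrank ℝ F)) r ∂μ := by
  rcases le_or_gt r 0 with hr | hr
  · simp [truncatedCone, hr.not_gt]
  have hset : MeasurableSet {x | r ≤ ρ x} := measurableSet_le measurable_const hρ
  have hind (x : F) : (Set.Ioc 0 (ρ x)).indicator
      (fun s ↦ ENNReal.ofReal (s ^ Module.finrank ℝ F)) r =
      {x | r ≤ ρ x}.indicator (fun _ ↦ ENNReal.ofReal (r ^ Module.finrank ℝ F)) x := by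
    simp [Set.indicator, hr]
  simp_rw [hind]
  rw [preimage_mk_truncatedCone hr, Measure.addHaar_smul, lintegral_indicator hset,
    Measure.restrict_restrict hset, setLIntegral_const, Set.inter_comm, abs_of_pos (pow_pos hr _)]

lemma lintegral_indicator_Ioc_pow {a : ℝ} (ha : 0 ≤ a) (n : ℕ) :
    ∫⁻ r, (Set.Ioc 0 a).indicator (fun s ↦ ENNReal.ofReal (s ^ n)) r =
      ENNReal.ofReal (a ^ (n + 1) / (n + 1)) := by
  rw [lintegral_indicator measurableSet_Ioc, ← ofReal_integral_eq_lintegral_ofReal,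
    ← intervalIntegral.integral_of_le ha, integral_pow]
  · simp
  · exact (continuous_pow n).integrableOn_Ioc
  · filter_upwards [ae_restrict_mem measurableSet_Ioc] with r hr
    exact pow_nonneg hr.1.le n

theorem measure_truncatedCone (μ : Measure F) [μ.IsAddHaarMeasure] {Ω : Set F}
    (hΩ : MeasurableSet Ω) {ρ : F → ℝ} (hρ : Measurable ρ) (hρ₀ : ∀ x ∈ Ω, 0 ≤ ρ x) :
    (volume.prod μ) (truncatedCone Ω ρ) =
      ∫⁻ x in Ω, ENNReal.ofReal
        (ρ x ^ (Module.finrank ℝ F + 1) / (Module.finrank ℝ F + 1)) ∂μ := by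
  rw [Measure.prod_apply (measurableSet_truncatedCone hΩ hρ)]
  simp_rw [measure_preimage_mk_truncatedCone μ Ω hρ]
  rw [lintegral_lintegral_swap]
  · refine setLIntegral_congr_fun hΩ fun x hx ↦ ?_
    simp only [lintegral_indicator_Ioc_pow (hρ₀ x hx)]
  · have hmeas : MeasurableSet {p : ℝ × F | 0 < p.1 ∧ p.1 ≤ ρ p.2} :=
      (measurableSet_lt measurable_const measurable_fst).inter
        (measurableSet_le measurable_fst (hρ.comp measurable_snd))
    have hint : Measurable fun p : ℝ × F ↦ ENNReal.ofReal (p.1 ^ Module.finrank ℝ F) := by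
      fun_prop
    exact (hint.indicator hmeas).aemeasurable

end TruncatedCone

/-- The triangle with vertices `(0, 0)`, `(1, 0)` and `(1, 1)`. -/
def unitTriangle : Set (ℝ × ℝ) :=
  {x | 0 ≤ x.2 ∧ x.2 ≤ x.1 ∧ x.1 ≤ 1}

lemma measurableSet_unitTriangle : MeasurableSet unitTriangle := by
  have hclosed : IsClosed unitTriangle :=
    (isClosed_le continuous_const continuous_snd).inter
      ((isClosed_le continuous_snd continuous_fst).inter
        (isClosed_le continuous_fst continuous_const))
  exact hclosed.measurableSet

lemma setLIntegral_unitTriangle {g : ℝ × ℝ → ENNReal} (hg : Measurable g) :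
    ∫⁻ x in unitTriangle, g x =
      ∫⁻ t in Set.Icc (0 : ℝ) 1, ∫⁻ u in Set.Icc (0 : ℝ) t, g (t, u) := by
  rw [← lintegral_indicator measurableSet_unitTriangle, Measure.volume_eq_prod,
    lintegral_prod _ (hg.indicator measurableSet_unitTriangle).aemeasurable,
    ← lintegral_indicator measurableSet_Icc]
  refine lintegral_congr fun t ↦ ?_
  by_cases ht : t ∈ Set.Icc (0 : ℝ) 1
  · rw [Set.indicator_of_mem ht, ← lintegral_indicator measurableSet_Icc]
    refine lintegral_congr fun u ↦ ?_
    simp [Set.indicator, unitTriangle, ht.2]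
  · have hzero (u : ℝ) : unitTriangle.indicator g (t, u) = 0 :=
      Set.indicator_of_notMem (fun h ↦ ht ⟨h.1.trans h.2.1, h.2.2⟩) g
    simp only [hzero, lintegral_zero, Set.indicator_of_notMem ht]

/-- The unipotent change of coordinates carrying the positive octant of `E3` onto the cone over
`{1} × unitTriangle`. -/
def partialSums (t : E3) : ℝ × ℝ × ℝ :=
  (t 0 + t 1 + t 2, t 1 + t 2, t 2)

lemma measurePreserving_partialSums : MeasurePreserving partialSums volume volume := by
  set A : Matrix (Fin 3) (Fin 3) ℝ := !![1, 1, 1; 0, 1, 1; 0, 0, 1] with hA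
  have hdet : A.det = 1 := by simp [hA, Matrix.det_fin_three]
  have hshear : MeasurePreserving (Matrix.toLin' A) volume volume := by
    refine ⟨(LinearMap.continuous_of_finiteDimensional _).measurable, ?_⟩
    simp [Real.map_matrix_volume_pi_eq_smul_volume_pi (by simp [hdet] : A.det ≠ 0), hdet]
  have hpair : MeasurePreserving
      (Prod.map id MeasurableEquiv.finTwoArrow : ℝ × (Fin 2 → ℝ) → ℝ × ℝ × ℝ) volume volume :=
    (MeasurePreserving.id _).prod (volume_preserving_finTwoArrow ℝ)
  have hcomp := (hpair.comp (volume_preserving_piFinSuccAbove (fun _ : Fin 3 ↦ ℝ) 0)).comp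
    (hshear.comp (PiLp.volume_preserving_ofLp (Fin 3)))
  have heq : partialSums =
      (Prod.map id MeasurableEquiv.finTwoArrow ∘ MeasurableEquiv.piFinSuccAbove (fun _ ↦ ℝ) 0) ∘
        Matrix.toLin' A ∘ WithLp.ofLp := by
    funext t
    simp [hA, partialSums, MeasurableEquiv.piFinSuccAbove, MeasurableEquiv.finTwoArrow,
      Fin.sum_univ_three, dotProduct]
  rwa [heq]

/-! ### The density of an orthoscheme -/

/-- The positive octant cut off by the quadric
`(t₀ + t₁ + t₂)² + β (t₁ + t₂)² + (γ - β) t₂² ≤ 1`. In coordinates along the vertices of an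
orthoscheme `0, u, f, q` with `‖u‖ = 1`, `‖f‖² = 1 + β` and `‖q‖² = 1 + γ`, it is the part of
the unit ball in the cone over the orthoscheme. -/
def orthoSector (β γ : ℝ) : Set E3 :=
  {t | 0 ≤ t 0 ∧ 0 ≤ t 1 ∧ 0 ≤ t 2 ∧
    (t 0 + t 1 + t 2) ^ 2 + β * (t 1 + t 2) ^ 2 + (γ - β) * t 2 ^ 2 ≤ 1}

/-- The integrand of `rogersDensity`. -/
def rogersIntegrand (β γ t : ℝ) : ℝ :=
  2 * t / ((1 + β * t ^ 2) * √(1 + γ * t ^ 2))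

/-- The volume of the unit ball in the cone over an orthoscheme whose vertices have squared
distances `1`, `1 + β`, `1 + γ` from the apex, divided by the volume of the orthoscheme. -/
def rogersDensity (β γ : ℝ) : ℝ :=
  ∫ t in (0 : ℝ)..1, rogersIntegrand β γ t

lemma continuous_rogersIntegrand {β γ : ℝ} (hβ : 0 ≤ β) (hγ : 0 ≤ γ) :
    Continuous (rogersIntegrand β γ) :=
  Continuous.div (by fun_prop) (by fun_prop) fun t ↦ by positivity

lemma rogersIntegrand_nonneg {β γ t : ℝ} (hβ : 0 ≤ β) (ht : 0 ≤ t) :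
    0 ≤ rogersIntegrand β γ t := by
  unfold rogersIntegrand
  positivity

lemma rogersDensity_nonneg {β : ℝ} (hβ : 0 ≤ β) (γ : ℝ) : 0 ≤ rogersDensity β γ :=
  intervalIntegral.integral_nonneg zero_le_one fun _ ht ↦ rogersIntegrand_nonneg hβ ht.1

lemma rogersDensity_zero_zero : rogersDensity 0 0 = 1 := by
  simp only [rogersDensity, rogersIntegrand, zero_mul, add_zero, Real.sqrt_one, mul_one, div_one]
  rw [intervalIntegral.integral_const_mul, integral_id]
  norm_num

lemma hasDerivAt_div_mul_sqrt {A C : ℝ} (hA : 0 < A) (hC : 0 ≤ C) (u : ℝ) :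
    HasDerivAt (fun u ↦ u / (A * √(A + C * u ^ 2))) ((√(A + C * u ^ 2))⁻¹ ^ 3) u := by
  have hpos : 0 < A + C * u ^ 2 := by positivity
  have hquad : HasDerivAt (fun u : ℝ ↦ A + C * u ^ 2) (C * (2 * u)) u := by
    simpa using ((hasDerivAt_pow 2 u).const_mul C).const_add A
  have hsqrt := Real.sqrt_pos.2 hpos
  refine ((hasDerivAt_id u).div ((hquad.sqrt hpos.ne').const_mul A)
    (mul_pos hA hsqrt).ne').congr_deriv ?_
  have hsq := Real.sq_sqrt hpos.le
  set s := √(A + C * u ^ 2)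
  simp only [id]
  field_simp
  linear_combination hsq

lemma setLIntegral_inv_sqrt_pow_three {A C t : ℝ} (hA : 0 < A) (hC : 0 ≤ C) (ht : 0 ≤ t) :
    ∫⁻ u in Set.Icc 0 t, ENNReal.ofReal ((√(A + C * u ^ 2))⁻¹ ^ 3 / 3) =
      ENNReal.ofReal (t / (A * √(A + C * t ^ 2)) / 3) := by
  have hcont : Continuous fun u : ℝ ↦ (√(A + C * u ^ 2))⁻¹ ^ 3 / 3 := by
    refine Continuous.div_const (Continuous.pow (Continuous.inv₀ (by fun_prop) fun u ↦ ?_) 3) 3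
    have : 0 < A + C * u ^ 2 := by positivity
    exact (Real.sqrt_pos.2 this).ne'
  rw [← ofReal_integral_eq_lintegral_ofReal hcont.integrableOn_Icc
      (.of_forall fun u ↦ by positivity),
    integral_Icc_eq_integral_Ioc, ← intervalIntegral.integral_of_le ht,
    intervalIntegral.integral_eq_sub_of_hasDerivAt
      (fun u _ ↦ (hasDerivAt_div_mul_sqrt hA hC u).div_const 3)
      (hcont.intervalIntegrable _ _)]
  simp

/-- The height at which the ray through `(1, x)` leaves the quadric bounding `orthoSector β γ`, in
the coordinates `partialSums`. -/
def orthoSectorHeight (β γ : ℝ) (x : ℝ × ℝ) : ℝ :=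
  (√(1 + β * x.1 ^ 2 + (γ - β) * x.2 ^ 2))⁻¹

lemma measurable_orthoSectorHeight (β γ : ℝ) : Measurable (orthoSectorHeight β γ) := by
  unfold orthoSectorHeight
  fun_prop

lemma le_orthoSectorHeight_iff {β γ r : ℝ} (hβ : 0 ≤ β) (hβγ : β ≤ γ) (hr : 0 < r) (x : ℝ × ℝ) :
    r ≤ orthoSectorHeight β γ (r⁻¹ • x) ↔ r ^ 2 + β * x.1 ^ 2 + (γ - β) * x.2 ^ 2 ≤ 1 := by
  have hγβ := sub_nonneg.2 hβγ
  have hpos : 0 < 1 + β * (r⁻¹ * x.1) ^ 2 + (γ - β) * (r⁻¹ * x.2) ^ 2 := by positivity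
  have hscale : 1 + β * (r⁻¹ * x.1) ^ 2 + (γ - β) * (r⁻¹ * x.2) ^ 2 =
      (r ^ 2 + β * x.1 ^ 2 + (γ - β) * x.2 ^ 2) * r⁻¹ ^ 2 := by
    field_simp
  simp only [orthoSectorHeight, Prod.smul_fst, Prod.smul_snd, smul_eq_mul]
  rw [le_inv_comm₀ hr (Real.sqrt_pos.2 hpos), Real.sqrt_le_left (inv_pos.2 hr).le, hscale,
    mul_le_iff_le_one_left (by positivity)]

lemma mem_unitTriangle_inv_smul_iff {r : ℝ} (hr : 0 < r) (x : ℝ × ℝ) :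
    r⁻¹ • x ∈ unitTriangle ↔ 0 ≤ x.2 ∧ x.2 ≤ x.1 ∧ x.1 ≤ r := by
  simp only [unitTriangle, Set.mem_ofPred_eq, Prod.smul_fst, Prod.smul_snd, smul_eq_mul,
    mul_nonneg_iff_of_pos_left (inv_pos.2 hr), mul_le_mul_iff_right₀ (inv_pos.2 hr),
    inv_mul_le_iff₀ hr, mul_one]

lemma orthoSector_diff_zero {β γ : ℝ} (hβ : 0 ≤ β) (hβγ : β ≤ γ) :
    orthoSector β γ \ {0} =
      partialSums ⁻¹' truncatedCone unitTriangle (orthoSectorHeight β γ) := by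
  ext t
  simp only [Set.mem_sdiff, Set.mem_singleton_iff, Set.mem_preimage, truncatedCone,
    Set.mem_ofPred_eq, partialSums]
  constructor
  · rintro ⟨⟨h0, h1, h2, hq⟩, hne⟩
    have hsum : 0 < t 0 + t 1 + t 2 := by
      refine lt_of_le_of_ne (by positivity) fun hzero ↦ hne ?_
      ext i
      fin_cases i <;> simp <;> linarith
    exact ⟨hsum, (mem_unitTriangle_inv_smul_iff hsum _).2 ⟨h2, by linarith, by linarith⟩,
      (le_orthoSectorHeight_iff hβ hβγ hsum _).2 hq⟩
  · rintro ⟨hsum, htri, hheight⟩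
    obtain ⟨h2, h12, h012⟩ := (mem_unitTriangle_inv_smul_iff hsum _).1 htri
    refine ⟨⟨by linarith, by linarith, h2, (le_orthoSectorHeight_iff hβ hβγ hsum _).1 hheight⟩, ?_⟩
    rintro rfl
    simp at hsum

theorem volume_orthoSector {β γ : ℝ} (hβ : 0 ≤ β) (hβγ : β ≤ γ) :
    volume (orthoSector β γ) = ENNReal.ofReal (rogersDensity β γ / 6) := by
  have hheight := measurable_orthoSectorHeight β γ
  have hinner (t : ℝ) (ht : t ∈ Set.Icc (0 : ℝ) 1) :
      ∫⁻ u in Set.Icc 0 t, ENNReal.ofReal (orthoSectorHeight β γ (t, u) ^ 3 / 3) =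
        ENNReal.ofReal (rogersIntegrand β γ t / 6) := by
    simp only [orthoSectorHeight]
    rw [setLIntegral_inv_sqrt_pow_three (by positivity) (sub_nonneg.2 hβγ) ht.1, rogersIntegrand]
    ring_nf
  have hcone := measure_truncatedCone (volume : Measure (ℝ × ℝ)) measurableSet_unitTriangle
    hheight fun x _ ↦ by unfold orthoSectorHeight; positivity
  norm_num [Module.finrank_prod] at hcone
  rw [← measure_sdiff_null (measure_singleton (0 : E3)), orthoSector_diff_zero hβ hβγ,
    measurePreserving_partialSums.measure_preimage
      (measurableSet_truncatedCone measurableSet_unitTriangle hheight).nullMeasurableSet,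
    Measure.volume_eq_prod, hcone, setLIntegral_unitTriangle (by fun_prop),
    setLIntegral_congr_fun measurableSet_Icc hinner,
    ← ofReal_integral_eq_lintegral_ofReal, integral_Icc_eq_integral_Ioc,
    ← intervalIntegral.integral_of_le zero_le_one, intervalIntegral.integral_div, rogersDensity]
  · exact ((continuous_rogersIntegrand hβ (hβ.trans hβγ)).div_const 6).integrableOn_Icc
  · filter_upwards [ae_restrict_mem measurableSet_Icc] with t ht
    exact div_nonneg (rogersIntegrand_nonneg hβ ht.1) (by norm_num)

lemma arccos_one_div_sqrt_three : arccos (1 / √3) = π / 2 - arctan (1 / √2) := by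
  have hsq : 1 + (1 / √2) ^ 2 = (3 / 2 : ℝ) := by norm_num [div_pow]
  rw [arctan_eq_arcsin, hsq, Real.sqrt_div (by norm_num), arccos]
  congr 2
  field_simp

lemma hasDerivAt_arctan_sqrt (t : ℝ) :
    HasDerivAt (fun t ↦ 3 * √2 * arctan (√(1 + t ^ 2) / √2)) (rogersIntegrand (1 / 3) 1 t) t := by
  have hpos : 0 < 1 + t ^ 2 := by positivity
  have hquad : HasDerivAt (fun u : ℝ ↦ 1 + u ^ 2) (2 * t) t := by
    simpa using (hasDerivAt_pow 2 t).const_add 1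
  refine (((hquad.sqrt hpos.ne').div_const √2).arctan.const_mul (3 * √2)).congr_deriv ?_
  have htwo : √2 ^ 2 = (2 : ℝ) := Real.sq_sqrt zero_le_two
  have hsq := Real.sq_sqrt hpos.le
  rw [rogersIntegrand, one_mul, div_pow, htwo, hsq]
  field_simp
  ring

theorem rogersDensity_one_third_one : rogersDensity (1 / 3) 1 = δoct := by
  have htwo : √2 ^ 2 = (2 : ℝ) := Real.sq_sqrt zero_le_two
  have hsqrt8 : √8 = 2 * √2 := by
    rw [show (8 : ℝ) = 2 ^ 2 * 2 by norm_num, Real.sqrt_mul (by norm_num),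
      Real.sqrt_sq zero_le_two]
  rw [rogersDensity, intervalIntegral.integral_eq_sub_of_hasDerivAt
    (fun t _ ↦ hasDerivAt_arctan_sqrt t)
    ((continuous_rogersIntegrand (by norm_num) zero_le_one).intervalIntegrable _ _),
    δoct, arccos_one_div_sqrt_three, hsqrt8]
  norm_num
  field_simp
  rw [htwo]
  ring

lemma rogersIntegrand_lt {t : ℝ} (ht : 0 < t) :
    rogersIntegrand 0.64 0.87 t < rogersIntegrand (1 / 3) 1 t := by
  refine div_lt_div_of_pos_left (by positivity) (by positivity) ?_
  refine lt_of_pow_lt_pow_left₀ 2 (by positivity) ?_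
  rw [mul_pow, mul_pow, Real.sq_sqrt (by positivity), Real.sq_sqrt (by positivity)]
  have hsq : 0 < t ^ 2 := by positivity
  nlinarith [pow_pos hsq 2, pow_pos hsq 3]

lemma rogersDensity_lt_δoct : rogersDensity 0.64 0.87 < δoct := by
  rw [← rogersDensity_one_third_one]
  refine intervalIntegral.integral_lt_integral_of_continuousOn_of_le_of_exists_lt zero_lt_one
    (continuous_rogersIntegrand (by norm_num) (by norm_num)).continuousOn
    (continuous_rogersIntegrand (by norm_num) (by norm_num)).continuousOn
    (fun t ht ↦ (rogersIntegrand_lt ht.1).le) ⟨1, by simp, rogersIntegrand_lt one_pos⟩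

lemma rogersIntegrand_combination_le {t : ℝ} (ht : 0 ≤ t) :
    0.2875 * rogersIntegrand 0.64 0.87 t + rogersIntegrand (1 / 3) 0.87 t ≤
      1.2875 * rogersIntegrand (1 / 3) 1 t := by
  unfold rogersIntegrand
  set P := √(1 + 0.87 * t ^ 2) with hP
  set R := √(1 + 1 * t ^ 2) with hR
  have hPpos : 0 < P := Real.sqrt_pos.2 (by positivity)
  have hRpos : 0 < R := Real.sqrt_pos.2 (by positivity)
  have hcleared : R * (0.2875 * (1 + 1 / 3 * t ^ 2) + (1 + 0.64 * t ^ 2)) ≤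
      1.2875 * (1 + 0.64 * t ^ 2) * P := by
    refine le_of_sq_le_sq ?_ (by positivity)
    rw [mul_pow, mul_pow, hP, hR, Real.sq_sqrt (by positivity), Real.sq_sqrt (by positivity)]
    have hsq : 0 ≤ t ^ 2 := by positivity
    nlinarith [pow_nonneg hsq 2, pow_nonneg hsq 3]
  calc 0.2875 * (2 * t / ((1 + 0.64 * t ^ 2) * P)) + 2 * t / ((1 + 1 / 3 * t ^ 2) * P)
      = 2 * t / ((1 + 0.64 * t ^ 2) * P * (1 + 1 / 3 * t ^ 2) * R) *
          (R * (0.2875 * (1 + 1 / 3 * t ^ 2) + (1 + 0.64 * t ^ 2))) := by field_simp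
    _ ≤ 2 * t / ((1 + 0.64 * t ^ 2) * P * (1 + 1 / 3 * t ^ 2) * R) *
          (1.2875 * (1 + 0.64 * t ^ 2) * P) := by gcongr
    _ = 1.2875 * (2 * t / ((1 + 1 / 3 * t ^ 2) * R)) := by field_simp

lemma rogersDensity_sub_δoct_le :
    rogersDensity (1 / 3) 0.87 - δoct ≤ 0.2875 * (δoct - rogersDensity 0.64 0.87) := by
  have hcont₁ := continuous_rogersIntegrand (β := 0.64) (γ := 0.87) (by norm_num) (by norm_num)
  have hcont₂ := continuous_rogersIntegrand (β := 1 / 3) (γ := 0.87) (by norm_num) (by norm_num)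
  have hcont₃ := continuous_rogersIntegrand (β := 1 / 3) (γ := 1) (by norm_num) (by norm_num)
  have hint : 0.2875 * rogersDensity 0.64 0.87 + rogersDensity (1 / 3) 0.87 ≤
      1.2875 * rogersDensity (1 / 3) 1 := by
    simp only [rogersDensity]
    rw [← intervalIntegral.integral_const_mul, ← intervalIntegral.integral_const_mul,
      ← intervalIntegral.integral_add ((hcont₁.const_mul _).intervalIntegrable _ _)
        (hcont₂.intervalIntegrable _ _)]
    exact intervalIntegral.integral_mono_on zero_le_one
      (((hcont₁.const_mul _).add hcont₂).intervalIntegrable _ _)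
      ((hcont₃.const_mul _).intervalIntegrable _ _)
      fun t ht ↦ rogersIntegrand_combination_le ht.1
  rw [rogersDensity_one_third_one] at hint
  linarith

/-! ### Subdivision of cones and simplices -/

section Cones

variable {E : Type*} [AddCommGroup E] [Module ℝ E]

lemma mem_hull_triple {u v w x : E} :
    x ∈ PointedCone.hull ℝ {u, v, w} ↔
      ∃ a b c : ℝ, 0 ≤ a ∧ 0 ≤ b ∧ 0 ≤ c ∧ a • u + b • v + c • w = x := by
  rw [PointedCone.hull, Submodule.mem_span_triple]
  constructor
  · rintro ⟨a, b, c, h⟩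
    exact ⟨a, b, c, a.2, b.2, c.2, h⟩
  · rintro ⟨a, b, c, ha, hb, hc, h⟩
    exact ⟨⟨a, ha⟩, ⟨b, hb⟩, ⟨c, hc⟩, h⟩

lemma hull_insert_le_of_eq_combination {u v f : E} {a b : ℝ} (ha : 0 ≤ a) (hb : 0 ≤ b)
    (hf : f = a • u + b • v) (s : Set E) :
    PointedCone.hull ℝ (insert u (insert f s)) ≤ PointedCone.hull ℝ (insert u (insert v s)) := by
  set K := PointedCone.hull ℝ (insert u (insert v s))
  have hu : u ∈ K := Submodule.subset_span (by simp)
  have hv : v ∈ K := Submodule.subset_span (by simp)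
  refine Submodule.span_le.2 (Set.insert_subset hu (Set.insert_subset ?_ fun x hx ↦
    Submodule.subset_span (by simp [hx])))
  rw [hf]
  exact add_mem (PointedCone.smul_mem K ha hu) (PointedCone.smul_mem K hb hv)

lemma mem_hull_insert_of_mul_le {u v f z : E} {a b x y : ℝ} (hb : 0 ≤ b) (hab : 0 < a + b)
    (hf : f = a • u + b • v) {s : Set E} (hx : 0 ≤ x) (hy : 0 ≤ y)
    (hz : z ∈ PointedCone.hull ℝ s) (h : a * y ≤ b * x) :
    x • u + (y • v + z) ∈ PointedCone.hull ℝ (insert u (insert f s)) := by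
  set K := PointedCone.hull ℝ (insert u (insert f s))
  have hu : u ∈ K := Submodule.subset_span (by simp)
  have hf' : f ∈ K := Submodule.subset_span (by simp)
  have hz' : z ∈ K := Submodule.span_mono (fun _ hs ↦ by simp [hs]) hz
  obtain ⟨c, d, hc, hd, hcd⟩ : ∃ c d : ℝ, 0 ≤ c ∧ 0 ≤ d ∧ x • u + y • v = c • u + d • f := by
    rcases hb.eq_or_lt with rfl | hb
    · have hy0 : y = 0 := by nlinarith
      exact ⟨x, 0, hx, le_rfl, by simp [hy0]⟩
    · refine ⟨x - a * y / b, y / b, ?_, by positivity, ?_⟩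
      · rw [sub_nonneg, div_le_iff₀ hb]
        linarith
      · rw [hf]
        match_scalars <;> field_simp
        ring
  rw [← add_assoc, hcd]
  exact add_mem (add_mem (PointedCone.smul_mem K hc hu) (PointedCone.smul_mem K hd hf')) hz'

lemma hull_insert_insert_eq_union {u v f : E} {a b : ℝ} (ha : 0 ≤ a) (hb : 0 ≤ b)
    (hab : 0 < a + b) (hf : f = a • u + b • v) (s : Set E) :
    (PointedCone.hull ℝ (insert u (insert v s)) : Set E) =
      (PointedCone.hull ℝ (insert u (insert f s)) : Set E) ∪
        PointedCone.hull ℝ (insert v (insert f s)) := by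
  have hf' : f = b • v + a • u := by rw [hf, add_comm]
  refine subset_antisymm (fun p hp ↦ ?_) (Set.union_subset
    (hull_insert_le_of_eq_combination ha hb hf s) ?_)
  · obtain ⟨⟨x, hx⟩, q, hq, rfl⟩ := Submodule.mem_span_insert.1 hp
    obtain ⟨⟨y, hy⟩, z, hz, rfl⟩ := Submodule.mem_span_insert.1 hq
    rcases le_total (a * y) (b * x) with h | h
    · exact Or.inl (mem_hull_insert_of_mul_le hb hab hf hx hy hz h)
    · refine Or.inr ?_
      have := mem_hull_insert_of_mul_le ha (by linarith) hf' hy hx hz h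
      rwa [add_left_comm] at this
  · rw [Set.insert_comm u v]
    exact hull_insert_le_of_eq_combination hb ha hf' s

lemma exists_separating_functional {u v f : E} {a b : ℝ} (ha : 0 ≤ a) (hb : 0 ≤ b)
    (hab : 0 < a + b) (hf : f = a • u + b • v) {s : Set E}
    (hs : Submodule.span ℝ (insert f s) ≠ ⊤) :
    ∃ l : E →ₗ[ℝ] ℝ, l ≠ 0 ∧ (∀ x ∈ insert f s, l x = 0) ∧ 0 ≤ l u ∧ l v ≤ 0 := by
  obtain ⟨l, hl, hker⟩ := Submodule.exists_le_ker_of_lt_top _ hs.lt_top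
  have hzero (x) (hx : x ∈ insert f s) : l x = 0 := hker (Submodule.subset_span hx)
  have hrel : a * l u + b * l v = 0 := by simpa [hf] using hzero f (by simp)
  have hsign : l u * l v ≤ 0 := by
    have h₁ : a * (l u * l v) = -(b * l v ^ 2) := by linear_combination l v * hrel
    have h₂ : b * (l u * l v) = -(a * l u ^ 2) := by linear_combination l u * hrel
    have h₃ : 0 ≤ a * l u ^ 2 + b * l v ^ 2 := by positivity
    exact nonpos_of_mul_nonpos_right (by linarith : (a + b) * (l u * l v) ≤ 0) hab
  rcases mul_nonpos_iff.1 hsign with h | h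
  · exact ⟨l, hl, hzero, h⟩
  · exact ⟨-l, neg_ne_zero.2 hl, fun x hx ↦ by simp [hzero x hx], by simpa using h.1,
      by simpa using h.2⟩

lemma nonneg_of_mem_hull {l : E →ₗ[ℝ] ℝ} {s : Set E} (hs : ∀ x ∈ s, 0 ≤ l x) {x : E}
    (hx : x ∈ PointedCone.hull ℝ s) : 0 ≤ l x := by
  induction hx using Submodule.span_induction with
  | mem x hx => exact hs x hx
  | zero => simp
  | add x y _ _ hx hy => simpa using add_nonneg hx hy
  | smul c x _ hx =>
    have := mul_nonneg c.2 hx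
    rwa [← smul_eq_mul, ← map_smul] at this

lemma span_pair_ne_top (hdim : 2 < Module.finrank ℝ E) (u v : E) :
    Submodule.span ℝ {u, v} ≠ ⊤ := by
  classical
  intro h
  have hcard := (finrank_span_finset_le_card (R := ℝ) {u, v}).trans Finset.card_le_two
  rw [Set.finrank, Finset.coe_pair, h, finrank_top] at hcard
  lia

end Cones

section ConeSubdivision

variable {E : Type*} [NormedAddCommGroup E] [NormedSpace ℝ E] [FiniteDimensional ℝ E]
  [MeasurableSpace E] [BorelSpace E] (μ : Measure E) [μ.IsAddHaarMeasure]

lemma aedisjoint_hull_insert {u v f : E} {a b : ℝ} (ha : 0 ≤ a) (hb : 0 ≤ b)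
    (hab : 0 < a + b) (hf : f = a • u + b • v) {s : Set E}
    (hs : Submodule.span ℝ (insert f s) ≠ ⊤) :
    AEDisjoint μ (PointedCone.hull ℝ (insert u (insert f s)) : Set E)
      (PointedCone.hull ℝ (insert v (insert f s))) := by
  obtain ⟨l, hl, hzero, hu, hv⟩ := exists_separating_functional ha hb hab hf hs
  refine measure_mono_null (fun x hx ↦ ?_) (Measure.addHaar_submodule μ (LinearMap.ker l)
    (by rwa [ne_eq, LinearMap.ker_eq_top]))
  have hpos : 0 ≤ l x := nonneg_of_mem_hull
    (Set.forall_mem_insert.2 ⟨hu, fun y hy ↦ (hzero y hy).ge⟩) hx.1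
  have hneg : 0 ≤ (-l) x := nonneg_of_mem_hull (Set.forall_mem_insert.2
    ⟨by simpa using hv, fun y hy ↦ by simp [hzero y hy]⟩) hx.2
  exact le_antisymm (by simpa using hneg) hpos

theorem measureReal_inter_hull_insert_insert {X : Set E} (hX : NullMeasurableSet X μ)
    (hfin : μ X ≠ ⊤) {u v f : E} {a b : ℝ} (ha : 0 ≤ a) (hb : 0 ≤ b) (hab : 0 < a + b)
    (hf : f = a • u + b • v) {s : Set E} (hs : Submodule.span ℝ (insert f s) ≠ ⊤) :
    μ.real (X ∩ PointedCone.hull ℝ (insert u (insert v s))) =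
      μ.real (X ∩ PointedCone.hull ℝ (insert u (insert f s))) +
        μ.real (X ∩ PointedCone.hull ℝ (insert v (insert f s))) := by
  rw [hull_insert_insert_eq_union ha hb hab hf, Set.inter_union_distrib_left]
  exact measureReal_union₀ (hX.inter ((PointedCone.convex _).nullMeasurableSet μ))
    ((aedisjoint_hull_insert μ ha hb hab hf hs).mono Set.inter_subset_right
      Set.inter_subset_right)
    (measure_ne_top_of_subset Set.inter_subset_left hfin)
    (measure_ne_top_of_subset Set.inter_subset_left hfin)

theorem measureReal_inter_hull_triple {X : Set E} (hX : NullMeasurableSet X μ) (hfin : μ X ≠ ⊤)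
    (hdim : 2 < Module.finrank ℝ E) {A B C q : E} {a b c : ℝ} (ha : 0 ≤ a) (hb : 0 ≤ b)
    (hc : 0 ≤ c) (hbc : 0 < b + c) (hq : q = a • A + b • B + c • C) :
    μ.real (X ∩ PointedCone.hull ℝ {A, B, C}) =
      μ.real (X ∩ PointedCone.hull ℝ {A, B, q}) + μ.real (X ∩ PointedCone.hull ℝ {A, C, q}) +
        μ.real (X ∩ PointedCone.hull ℝ {B, C, q}) := by
  -- The ray through `r` is where the plane of `A` and `q` meets the face of `B` and `C`.
  set r := b • B + c • C with hr
  have hqr : q = a • A + (1 : ℝ) • r := by rw [hq, hr]; module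
  have hABC : ({A, B, C} : Set E) = {B, C, A} := by
    rw [Set.insert_comm, Set.pair_comm A C]
  have hsplit {u v f : E} {x y : ℝ} (hx : 0 ≤ x) (hy : 0 ≤ y) (hxy : 0 < x + y)
      (hf : f = x • u + y • v) (w : E) :=
    measureReal_inter_hull_insert_insert μ hX hfin hx hy hxy hf (span_pair_ne_top hdim f w)
  have hrB : ({B, r, A} : Set E) = {A, r, B} := by
    rw [Set.insert_comm, Set.pair_comm B A, Set.insert_comm]
  have hrC : ({C, r, A} : Set E) = {A, r, C} := by
    rw [Set.insert_comm, Set.pair_comm C A, Set.insert_comm]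
  have hqB : ({r, q, B} : Set E) = {B, r, q} := by
    rw [Set.pair_comm q B, Set.insert_comm]
  have hqC : ({r, q, C} : Set E) = {C, r, q} := by
    rw [Set.pair_comm q C, Set.insert_comm]
  rw [hABC, hsplit hb hc hbc hr A, hrB, hrC, hsplit ha zero_le_one (by linarith) hqr B,
    hsplit ha zero_le_one (by linarith) hqr C, hsplit hb hc hbc hr q, hqB, hqC,
    Set.pair_comm q B, Set.pair_comm q C]
  ring

end ConeSubdivision

section Simplices

variable {E : Type*} [AddCommGroup E] [Module ℝ E]

lemma combination_mem_of_convex_of_zero_mem {X : Set E} (hX : Convex ℝ X) (h0 : (0 : E) ∈ X)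
    {u v w : E} (hu : u ∈ X) (hv : v ∈ X) (hw : w ∈ X) {a b c : ℝ} (ha : 0 ≤ a) (hb : 0 ≤ b)
    (hc : 0 ≤ c) (habc : a + b + c ≤ 1) : a • u + b • v + c • w ∈ X := by
  have hmem := hX.sum_mem (t := Finset.univ) (w := ![1 - (a + b + c), a, b, c])
    (z := ![0, u, v, w]) (by simp [Fin.forall_fin_succ, ha, hb, hc, habc])
    (by simp [Fin.sum_univ_four]; ring) (by simp [Fin.forall_fin_succ, h0, hu, hv, hw])
  simpa [Fin.sum_univ_four] using hmem

lemma mem_convexHull_zero_triple {u v w x : E} :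
    x ∈ convexHull ℝ {0, u, v, w} ↔
      ∃ a b c : ℝ, 0 ≤ a ∧ 0 ≤ b ∧ 0 ≤ c ∧ a + b + c ≤ 1 ∧ a • u + b • v + c • w = x := by
  constructor
  · intro hx
    refine convexHull_min (t := {x | ∃ a b c : ℝ, 0 ≤ a ∧ 0 ≤ b ∧ 0 ≤ c ∧ a + b + c ≤ 1 ∧
      a • u + b • v + c • w = x}) ?_ ?_ hx
    · rintro y (rfl | rfl | rfl | rfl)
      · exact ⟨0, 0, 0, by simp⟩
      · exact ⟨1, 0, 0, by simp⟩
      · exact ⟨0, 1, 0, by simp⟩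
      · exact ⟨0, 0, 1, by simp⟩
    · rintro _ ⟨a, b, c, ha, hb, hc, habc, rfl⟩ _ ⟨a', b', c', ha', hb', hc', habc', rfl⟩
        s t hs ht hst
      exact ⟨s * a + t * a', s * b + t * b', s * c + t * c', by positivity, by positivity,
        by positivity, by nlinarith, by module⟩
  · rintro ⟨a, b, c, ha, hb, hc, habc, rfl⟩
    have hmem (y) (hy : y ∈ ({0, u, v, w} : Set E)) := subset_convexHull ℝ _ hy
    exact combination_mem_of_convex_of_zero_mem (convex_convexHull ℝ _) (hmem _ (by simp))
      (hmem _ (by simp)) (hmem _ (by simp)) (hmem _ (by simp)) ha hb hc habc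

end Simplices

/-- The linear map of `E3` sending the standard basis to `u`, `v`, `w`. -/
def tripleMap (u v w : E3) : E3 →ₗ[ℝ] E3 where
  toFun t := t 0 • u + t 1 • v + t 2 • w
  map_add' x y := by
    simp only [PiLp.add_apply]
    module
  map_smul' c x := by
    simp only [PiLp.smul_apply, smul_eq_mul, RingHom.id_apply]
    module

lemma tripleMap_apply (u v w t : E3) : tripleMap u v w t = t 0 • u + t 1 • v + t 2 • w := rfl

lemma det_tripleMap (u v w : E3) :
    LinearMap.det (tripleMap u v w) =
      u 0 * v 1 * w 2 - u 0 * v 2 * w 1 - u 1 * v 0 * w 2 + u 1 * v 2 * w 0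
        + u 2 * v 0 * w 1 - u 2 * v 1 * w 0 := by
  rw [← LinearMap.det_toMatrix (EuclideanSpace.basisFun (Fin 3) ℝ).toBasis, Matrix.det_fin_three]
  simp only [LinearMap.toMatrix_apply, tripleMap_apply, OrthonormalBasis.coe_toBasis,
    OrthonormalBasis.coe_toBasis_repr_apply, EuclideanSpace.basisFun_repr,
    EuclideanSpace.basisFun_apply, PiLp.add_apply, PiLp.smul_apply, smul_eq_mul]
  simp
  ring

lemma tripleMap_image_orthoSector_zero (u v w : E3) :
    tripleMap u v w '' orthoSector 0 0 = convexHull ℝ {0, u, v, w} := by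
  ext x
  rw [mem_convexHull_zero_triple]
  constructor
  · rintro ⟨t, ⟨h0, h1, h2, hsum⟩, rfl⟩
    refine ⟨t 0, t 1, t 2, h0, h1, h2, ?_, rfl⟩
    nlinarith
  · rintro ⟨a, b, c, ha, hb, hc, hsum, rfl⟩
    refine ⟨!₂[a, b, c], ⟨by simpa, by simpa, by simpa, ?_⟩, by simp [tripleMap_apply]⟩
    simpa using pow_le_one₀ (n := 2) (by positivity) hsum

lemma volumeReal_image_tripleMap_orthoSector (u v w : E3) {β γ : ℝ} (hβ : 0 ≤ β) (hβγ : β ≤ γ) :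
    volume.real (tripleMap u v w '' orthoSector β γ) =
      |LinearMap.det (tripleMap u v w)| * (rogersDensity β γ / 6) := by
  rw [measureReal_def, Measure.addHaar_image_linearMap, volume_orthoSector hβ hβγ,
    ENNReal.toReal_mul, ENNReal.toReal_ofReal (abs_nonneg _),
    ENNReal.toReal_ofReal (div_nonneg (rogersDensity_nonneg hβ γ) (by norm_num))]

theorem volumeReal_convexHull_zero_triple (u v w : E3) :
    volume.real (convexHull ℝ {0, u, v, w}) = |LinearMap.det (tripleMap u v w)| / 6 := by
  rw [← tripleMap_image_orthoSector_zero,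
    volumeReal_image_tripleMap_orthoSector u v w le_rfl le_rfl, rogersDensity_zero_zero,
    mul_one_div]

lemma volumeReal_convexHull_flag (A B C : E3) (s μ ν a b c : ℝ) :
    volume.real (convexHull ℝ {0, s • A, μ • A + ν • B, a • A + b • B + c • C}) =
      |s * ν * c| * volume.real (convexHull ℝ {0, A, B, C}) := by
  rw [volumeReal_convexHull_zero_triple, volumeReal_convexHull_zero_triple, ← mul_div_assoc,
    ← abs_mul]
  congr 2
  simp only [det_tripleMap, PiLp.add_apply, PiLp.smul_apply, smul_eq_mul]
  ring

theorem volumeReal_convexHull_pos {p₀ p₁ p₂ p₃ : E3}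
    (hindep : AffineIndependent ℝ ![p₀, p₁, p₂, p₃]) :
    0 < volume.real (convexHull ℝ ({p₀, p₁, p₂, p₃} : Set E3)) := by
  have hrange : Set.range ![p₀, p₁, p₂, p₃] = {p₀, p₁, p₂, p₃} := by
    simp only [Matrix.range_cons, Matrix.range_empty, Set.union_empty, Set.singleton_union]
  have hspan := hindep.affineSpan_eq_top_iff_card_eq_finrank_add_one.2 (by simp)
  rw [hrange] at hspan
  have hint := interior_convexHull_nonempty_iff_affineSpan_eq_top.2 hspan
  refine ENNReal.toReal_pos (Measure.measure_pos_of_nonempty_interior volume hint).ne' ?_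
  exact ((Set.toFinite _).isCompact_convexHull ℝ).measure_ne_top

/-! ### Orthoschemes in the unit ball -/

section Orthoscheme

variable {E : Type*} [NormedAddCommGroup E] [InnerProductSpace ℝ E]

/-- The consecutive edges `u`, `f - u`, `q - f` of the simplex `0, u, f, q` are pairwise
orthogonal. -/
structure IsOrthoscheme (u f q : E) : Prop where
  inner_fst_snd : inner ℝ u f = ‖u‖ ^ 2
  inner_fst_trd : inner ℝ u q = ‖u‖ ^ 2
  inner_snd_trd : inner ℝ f q = ‖f‖ ^ 2

lemma IsOrthoscheme.norm_combination_sq {u f q : E} (h : IsOrthoscheme u f q) (a b c : ℝ) :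
    ‖a • u + b • f + c • q‖ ^ 2 =
      ((a + b + c) ^ 2 - (b + c) ^ 2) * ‖u‖ ^ 2 + ((b + c) ^ 2 - c ^ 2) * ‖f‖ ^ 2 +
        c ^ 2 * ‖q‖ ^ 2 := by
  rw [norm_add_sq_real, norm_add_sq_real]
  simp only [norm_smul, mul_pow, Real.norm_eq_abs, sq_abs, inner_add_left, real_inner_smul_left,
    real_inner_smul_right, h.inner_fst_snd, h.inner_fst_trd, h.inner_snd_trd]
  ring

lemma IsOrthoscheme.le_norm_combination_sq {u f q : E} (h : IsOrthoscheme u f q) {β γ : ℝ}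
    (hu : 1 ≤ ‖u‖ ^ 2) (hf : 1 + β ≤ ‖f‖ ^ 2) (hq : 1 + γ ≤ ‖q‖ ^ 2) {a b c : ℝ} (ha : 0 ≤ a)
    (hb : 0 ≤ b) (hc : 0 ≤ c) :
    (a + b + c) ^ 2 + β * (b + c) ^ 2 + (γ - β) * c ^ 2 ≤ ‖a • u + b • f + c • q‖ ^ 2 := by
  have h₁ : 0 ≤ (a + b + c) ^ 2 - (b + c) ^ 2 := sub_nonneg.2 (by gcongr; linarith)
  have h₂ : 0 ≤ (b + c) ^ 2 - c ^ 2 := sub_nonneg.2 (by gcongr; linarith)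
  rw [h.norm_combination_sq]
  calc (a + b + c) ^ 2 + β * (b + c) ^ 2 + (γ - β) * c ^ 2
      = ((a + b + c) ^ 2 - (b + c) ^ 2) * 1 + ((b + c) ^ 2 - c ^ 2) * (1 + β) +
          c ^ 2 * (1 + γ) := by ring
    _ ≤ _ := by gcongr

end Orthoscheme

theorem volumeReal_closedBall_inter_hull_le_of_isOrthoscheme {u f q : E3}
    (h : IsOrthoscheme u f q) {β γ : ℝ} (hβ : 0 ≤ β) (hβγ : β ≤ γ) (hu : 1 ≤ ‖u‖ ^ 2)
    (hf : 1 + β ≤ ‖f‖ ^ 2) (hq : 1 + γ ≤ ‖q‖ ^ 2) :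
    volume.real (Metric.closedBall (0 : E3) 1 ∩ PointedCone.hull ℝ {u, f, q}) ≤
      rogersDensity β γ * volume.real (convexHull ℝ {0, u, f, q}) := by
  have hsub : Metric.closedBall (0 : E3) 1 ∩ PointedCone.hull ℝ {u, f, q} ⊆
      tripleMap u f q '' orthoSector β γ := by
    rintro x ⟨hx, hxK⟩
    obtain ⟨a, b, c, ha, hb, hc, rfl⟩ := mem_hull_triple.1 hxK
    refine ⟨!₂[a, b, c], ⟨by simpa, by simpa, by simpa, ?_⟩, by simp [tripleMap_apply]⟩
    exact (h.le_norm_combination_sq hu hf hq ha hb hc).trans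
      (pow_le_one₀ (norm_nonneg _) (mem_closedBall_zero_iff.1 hx))
  have hfin : volume (tripleMap u f q '' orthoSector β γ) ≠ ⊤ := by
    rw [Measure.addHaar_image_linearMap, volume_orthoSector hβ hβγ]
    exact ENNReal.mul_ne_top ENNReal.ofReal_ne_top ENNReal.ofReal_ne_top
  refine (measureReal_mono hsub hfin).trans_eq ?_
  rw [volumeReal_image_tripleMap_orthoSector u f q hβ hβγ, volumeReal_convexHull_zero_triple]
  ring

lemma convexHull_zero_triple_subset_inter_hull {E : Type*} [AddCommGroup E] [Module ℝ E]
    {X : Set E} (hX : Convex ℝ X) (h0 : (0 : E) ∈ X) {u f q : E} (hu : u ∈ X)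
    (hf : f ∈ X) (hq : q ∈ X) :
    convexHull ℝ {0, u, f, q} ⊆ X ∩ PointedCone.hull ℝ {u, f, q} := by
  refine fun x hx ↦ ⟨convexHull_min ?_ hX hx, ?_⟩
  · simp [Set.insert_subset_iff, h0, hu, hf, hq]
  · obtain ⟨a, b, c, ha, hb, hc, -, rfl⟩ := mem_convexHull_zero_triple.1 hx
    exact mem_hull_triple.2 ⟨a, b, c, ha, hb, hc, rfl⟩

lemma hull_insert_smul {E : Type*} [AddCommGroup E] [Module ℝ E] {c : ℝ} (hc : 0 < c) (u : E)
    (s : Set E) :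
    PointedCone.hull ℝ (insert (c • u) s) = PointedCone.hull ℝ (insert u s) := by
  have hle {a : ℝ} (ha : 0 < a) (v : E) :
      PointedCone.hull ℝ (insert (a • v) s) ≤ PointedCone.hull ℝ (insert v s) :=
    Submodule.span_le.2 (Set.insert_subset
      (PointedCone.smul_mem _ ha.le (Submodule.subset_span (Set.mem_insert _ _)))
      ((Set.subset_insert _ _).trans Submodule.subset_span))
  exact le_antisymm (hle hc u) (by simpa [hc.ne'] using hle (inv_pos.2 hc) (c • u))

/-! ### Circumcenters of triangles -/

section Triangle

/-- Sixteen times the squared area of a triangle with squared side lengths `x`, `y`, `z`. -/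
def heron (x y z : ℝ) : ℝ := 2 * x * y + 2 * y * z + 2 * x * z - x ^ 2 - y ^ 2 - z ^ 2

/-- The squared circumradius of a triangle with squared side lengths `x`, `y`, `z`; it is `0` by
division by zero when the triangle is degenerate. -/
def circumradiusSq (x y z : ℝ) : ℝ := x * y * z / heron x y z

lemma heron_rotate (x y z : ℝ) : heron y z x = heron x y z := by
  unfold heron
  ring

lemma circumradiusSq_rotate (x y z : ℝ) : circumradiusSq y z x = circumradiusSq x y z := by
  rw [circumradiusSq, circumradiusSq, heron_rotate]
  ring

lemma heron_pos {x y z : ℝ} (hx : x ∈ Set.Icc 4 8) (hy : y ∈ Set.Icc 4 8) (hz : z ∈ Set.Icc 4 8) :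
    0 < heron x y z := by
  have hxyz : (x + y - z) ^ 2 ≤ (x + y - 4) ^ 2 :=
    pow_le_pow_left₀ (by linarith [hx.1, hy.1, hz.2]) (by linarith [hz.1]) 2
  have hxy : (x - y) ^ 2 ≤ 4 ^ 2 :=
    sq_le_sq' (by linarith [hx.1, hy.2]) (by linarith [hx.2, hy.1])
  have heq : heron x y z = 4 * x * y - (x + y - z) ^ 2 := by
    unfold heron
    ring
  nlinarith [hx.1, hy.1]

lemma circumradiusSq_le_of_le {x y z₀ z : ℝ} (hx : x ∈ Set.Icc 4 8) (hy : y ∈ Set.Icc 4 8)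
    (hz₀ : z₀ ∈ Set.Icc 4 8) (hz : z ∈ Set.Icc 4 8) (hle : z₀ ≤ z) :
    circumradiusSq x y z₀ ≤ circumradiusSq x y z := by
  have hxy : (x - y) ^ 2 ≤ z * z₀ := by
    have : (x - y) ^ 2 ≤ 4 ^ 2 := sq_le_sq' (by linarith [hx.1, hy.2]) (by linarith [hx.2, hy.1])
    nlinarith [hz.1, hz₀.1]
  have hxy₀ : 0 ≤ x * y := mul_nonneg (by linarith [hx.1]) (by linarith [hy.1])
  rw [circumradiusSq, circumradiusSq, div_le_div_iff₀ (heron_pos hx hy hz₀) (heron_pos hx hy hz),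
    ← sub_nonneg]
  have heq : x * y * z * heron x y z₀ - x * y * z₀ * heron x y z =
      x * y * ((z - z₀) * (z * z₀ - (x - y) ^ 2)) := by
    unfold heron
    ring
  rw [heq]
  exact mul_nonneg hxy₀ (mul_nonneg (sub_nonneg.2 hle) (sub_nonneg.2 hxy))

theorem circumradiusSq_mono {x₀ y₀ z₀ x y z : ℝ} (hx₀ : 4 ≤ x₀) (hy₀ : 4 ≤ y₀) (hz₀ : 4 ≤ z₀)
    (hx : x₀ ≤ x) (hy : y₀ ≤ y) (hz : z₀ ≤ z) (hx8 : x ≤ 8) (hy8 : y ≤ 8) (hz8 : z ≤ 8) :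
    circumradiusSq x₀ y₀ z₀ ≤ circumradiusSq x y z := by
  have mem {t₀ t : ℝ} (h₀ : 4 ≤ t₀) (h : t₀ ≤ t) (h8 : t ≤ 8) :
      t₀ ∈ Set.Icc (4 : ℝ) 8 ∧ t ∈ Set.Icc (4 : ℝ) 8 :=
    ⟨⟨h₀, h.trans h8⟩, h₀.trans h, h8⟩
  obtain ⟨mx₀, mx⟩ := mem hx₀ hx hx8
  obtain ⟨my₀, my⟩ := mem hy₀ hy hy8
  obtain ⟨mz₀, mz⟩ := mem hz₀ hz hz8
  calc circumradiusSq x₀ y₀ z₀ ≤ circumradiusSq x₀ y₀ z :=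
        circumradiusSq_le_of_le mx₀ my₀ mz₀ mz hz
    _ = circumradiusSq z x₀ y₀ := circumradiusSq_rotate _ _ _
    _ ≤ circumradiusSq z x₀ y := circumradiusSq_le_of_le mz mx₀ my₀ my hy
    _ = circumradiusSq y z x₀ := by rw [circumradiusSq_rotate, circumradiusSq_rotate]
    _ ≤ circumradiusSq y z x := circumradiusSq_le_of_le my mz mx₀ mx hx
    _ = circumradiusSq x y z := circumradiusSq_rotate _ _ _

/-- The squared side lengths of the triangle `0, A, B` lie in `[4, 8]`; in particular it has no
obtuse angle. -/
structure IsModerateTriangle {E : Type*} [NormedAddCommGroup E] (A B : E) : Prop where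
  norm_fst_sq_mem : ‖A‖ ^ 2 ∈ Set.Icc (4 : ℝ) 8
  norm_snd_sq_mem : ‖B‖ ^ 2 ∈ Set.Icc (4 : ℝ) 8
  norm_sub_sq_mem : ‖A - B‖ ^ 2 ∈ Set.Icc (4 : ℝ) 8

lemma IsModerateTriangle.symm {E : Type*} [NormedAddCommGroup E] {A B : E}
    (h : IsModerateTriangle A B) : IsModerateTriangle B A :=
  ⟨h.norm_snd_sq_mem, h.norm_fst_sq_mem, norm_sub_rev A B ▸ h.norm_sub_sq_mem⟩

lemma IsModerateTriangle.circumradiusSq_mono {E : Type*} [NormedAddCommGroup E] {A B : E}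
    {x y z : ℝ} (h : IsModerateTriangle A B) (hx : 4 ≤ x) (hy : 4 ≤ y) (hz : 4 ≤ z)
    (hxA : x ≤ ‖A‖ ^ 2) (hyB : y ≤ ‖B‖ ^ 2) (hzAB : z ≤ ‖A - B‖ ^ 2) :
    circumradiusSq x y z ≤ circumradiusSq (‖A‖ ^ 2) (‖B‖ ^ 2) (‖A - B‖ ^ 2) :=
  _root_.circumradiusSq_mono hx hy hz hxA hyB hzAB h.norm_fst_sq_mem.2 h.norm_snd_sq_mem.2
    h.norm_sub_sq_mem.2

/-- All squared edge lengths of the simplex `0, A, B, C` lie in `[4, 8]`. -/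
structure IsModerateSimplex {E : Type*} [NormedAddCommGroup E] (A B C : E) : Prop where
  face_fst_snd : IsModerateTriangle A B
  face_fst_trd : IsModerateTriangle A C
  face_snd_trd : IsModerateTriangle B C

lemma IsModerateSimplex.swap {E : Type*} [NormedAddCommGroup E] {A B C : E}
    (h : IsModerateSimplex A B C) : IsModerateSimplex A C B :=
  ⟨h.face_fst_trd, h.face_fst_snd, h.face_snd_trd.symm⟩

lemma IsModerateSimplex.rotate {E : Type*} [NormedAddCommGroup E] {A B C : E}
    (h : IsModerateSimplex A B C) : IsModerateSimplex B C A :=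
  ⟨h.face_snd_trd, h.face_fst_snd.symm, h.face_fst_trd.symm⟩

variable {E : Type*} [NormedAddCommGroup E] [InnerProductSpace ℝ E]

lemma IsModerateTriangle.inner_nonneg {A B : E} (h : IsModerateTriangle A B) :
    0 ≤ inner ℝ A B := by
  linarith [norm_sub_sq_real A B, h.norm_fst_sq_mem.1, h.norm_snd_sq_mem.1, h.norm_sub_sq_mem.2]

lemma IsModerateTriangle.inner_le_norm_fst_sq {A B : E} (h : IsModerateTriangle A B) :
    inner ℝ A B ≤ ‖A‖ ^ 2 := by
  linarith [norm_sub_sq_real A B, h.norm_fst_sq_mem.1, h.norm_snd_sq_mem.2, h.norm_sub_sq_mem.1]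

lemma IsModerateTriangle.inner_le_norm_snd_sq {A B : E} (h : IsModerateTriangle A B) :
    inner ℝ A B ≤ ‖B‖ ^ 2 :=
  real_inner_comm A B ▸ h.symm.inner_le_norm_fst_sq

lemma heron_norm_sq (A B : E) :
    heron (‖A‖ ^ 2) (‖B‖ ^ 2) (‖A - B‖ ^ 2) = 4 * (‖A‖ ^ 2 * ‖B‖ ^ 2 - inner ℝ A B ^ 2) := by
  rw [norm_sub_sq_real, heron]
  ring

/-- `f = μ • A + ν • B` is the circumcenter of the nonobtuse triangle `0, A, B`. Equidistance of
`f` from `0` and `A` is expressed as `⟪f, A⟫ = ‖A‖² / 2`. -/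
structure IsTriangleCircumcenter (A B f : E) (μ ν : ℝ) : Prop where
  eq_combination : f = μ • A + ν • B
  fst_nonneg : 0 ≤ μ
  snd_nonneg : 0 ≤ ν
  half_le_add : 1 / 2 ≤ μ + ν
  add_le_one : μ + ν ≤ 1
  inner_fst : inner ℝ f A = ‖A‖ ^ 2 / 2
  inner_snd : inner ℝ f B = ‖B‖ ^ 2 / 2

lemma IsModerateTriangle.exists_isTriangleCircumcenter {A B : E} (h : IsModerateTriangle A B) :
    ∃ f μ ν, IsTriangleCircumcenter A B f μ ν := by
  set x := ‖A‖ ^ 2 with hx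
  set y := ‖B‖ ^ 2 with hy
  set g : ℝ := inner ℝ A B with hg
  have hg₀ : 0 ≤ g := h.inner_nonneg
  have hgx : 0 ≤ x - g := sub_nonneg.2 h.inner_le_norm_fst_sq
  have hgy : 0 ≤ y - g := sub_nonneg.2 h.inner_le_norm_snd_sq
  set Δ := x * y - g ^ 2 with hΔ
  have hΔ₀ : 0 < Δ := by
    have := heron_pos h.norm_fst_sq_mem h.norm_snd_sq_mem h.norm_sub_sq_mem
    rw [heron_norm_sq] at this
    linarith
  have hsum : y * (x - g) / (2 * Δ) + x * (y - g) / (2 * Δ) =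
      (y * (x - g) + x * (y - g)) / (2 * Δ) := (add_div _ _ _).symm
  refine ⟨_, y * (x - g) / (2 * Δ), x * (y - g) / (2 * Δ), rfl,
    by positivity, by positivity, ?_, ?_, ?_, ?_⟩
  · rw [hsum, le_div_iff₀ (by positivity)]
    nlinarith [mul_nonneg hgx hgy]
  · rw [hsum, div_le_one (by positivity)]
    nlinarith [mul_nonneg hg₀ (add_nonneg hgx hgy)]
  · rw [inner_add_left, real_inner_smul_left, real_inner_smul_left, real_inner_self_eq_norm_sq,
      real_inner_comm A B, ← hx, ← hg]
    field_simp
    rw [hΔ]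
    ring
  · rw [inner_add_left, real_inner_smul_left, real_inner_smul_left, real_inner_self_eq_norm_sq,
      ← hy, ← hg]
    field_simp
    rw [hΔ]
    ring

namespace IsTriangleCircumcenter

variable {A B f q : E} {μ ν : ℝ}

lemma symm (h : IsTriangleCircumcenter A B f μ ν) : IsTriangleCircumcenter B A f ν μ :=
  ⟨h.eq_combination.trans (add_comm _ _), h.snd_nonneg, h.fst_nonneg, by linarith [h.half_le_add],
    by linarith [h.add_le_one], h.inner_snd, h.inner_fst⟩

lemma inner_eq_norm_sq (h : IsTriangleCircumcenter A B f μ ν) (hqA : inner ℝ q A = ‖A‖ ^ 2 / 2)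
    (hqB : inner ℝ q B = ‖B‖ ^ 2 / 2) : inner ℝ q f = ‖f‖ ^ 2 := by
  have hinner {x : E} (hA : inner ℝ x A = ‖A‖ ^ 2 / 2) (hB : inner ℝ x B = ‖B‖ ^ 2 / 2) :
      inner ℝ x f = μ * (‖A‖ ^ 2 / 2) + ν * (‖B‖ ^ 2 / 2) := by
    rw [h.eq_combination, inner_add_right, real_inner_smul_right, real_inner_smul_right, hA, hB]
  rw [← real_inner_self_eq_norm_sq, hinner hqA hqB, hinner h.inner_fst h.inner_snd]

lemma isOrthoscheme (h : IsTriangleCircumcenter A B f μ ν) (hqA : inner ℝ q A = ‖A‖ ^ 2 / 2)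
    (hqB : inner ℝ q B = ‖B‖ ^ 2 / 2) : IsOrthoscheme ((1 / 2 : ℝ) • A) f q := by
  have hhalf {x : E} (hx : inner ℝ x A = ‖A‖ ^ 2 / 2) :
      inner ℝ ((1 / 2 : ℝ) • A) x = ‖(1 / 2 : ℝ) • A‖ ^ 2 := by
    rw [real_inner_smul_left, real_inner_comm, hx, norm_smul, mul_pow, norm_eq_abs, sq_abs]
    ring
  exact ⟨hhalf h.inner_fst, hhalf hqA, by rw [real_inner_comm, h.inner_eq_norm_sq hqA hqB]⟩

lemma norm_sq_le (h : IsTriangleCircumcenter A B f μ ν) (hqA : inner ℝ q A = ‖A‖ ^ 2 / 2)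
    (hqB : inner ℝ q B = ‖B‖ ^ 2 / 2) : ‖f‖ ^ 2 ≤ ‖q‖ ^ 2 := by
  have hsub := norm_sub_sq_real q f
  rw [h.inner_eq_norm_sq hqA hqB] at hsub
  linarith [sq_nonneg ‖q - f‖]

lemma norm_sq_eq_circumradiusSq (h : IsTriangleCircumcenter A B f μ ν)
    (hAB : IsModerateTriangle A B) :
    ‖f‖ ^ 2 = circumradiusSq (‖A‖ ^ 2) (‖B‖ ^ 2) (‖A - B‖ ^ 2) := by
  rw [circumradiusSq, eq_div_iff
    (heron_pos hAB.norm_fst_sq_mem hAB.norm_snd_sq_mem hAB.norm_sub_sq_mem).ne', heron_norm_sq,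
    norm_sub_sq_real]
  have hA := h.inner_fst
  have hB := h.inner_snd
  have hf := h.inner_eq_norm_sq h.inner_fst h.inner_snd
  nth_rewrite 2 [h.eq_combination] at hf
  rw [inner_add_right, real_inner_smul_right, real_inner_smul_right, hA, hB] at hf
  rw [h.eq_combination, inner_add_left, real_inner_smul_left, real_inner_smul_left,
    real_inner_self_eq_norm_sq, ← real_inner_comm B A] at hA
  rw [h.eq_combination, inner_add_left, real_inner_smul_left, real_inner_smul_left,
    real_inner_self_eq_norm_sq] at hB
  set g : ℝ := inner ℝ A B
  linear_combination (-4 * (‖A‖ ^ 2 * ‖B‖ ^ 2 - g ^ 2)) * hf +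
    2 * ‖A‖ ^ 2 * (‖B‖ ^ 2 * hA - g * hB) + 2 * ‖B‖ ^ 2 * (‖A‖ ^ 2 * hB - g * hA)

end IsTriangleCircumcenter

lemma IsModerateTriangle.circumradiusSq_le_norm_sq {A B q : E} (h : IsModerateTriangle A B)
    (hqA : inner ℝ q A = ‖A‖ ^ 2 / 2) (hqB : inner ℝ q B = ‖B‖ ^ 2 / 2) :
    circumradiusSq (‖A‖ ^ 2) (‖B‖ ^ 2) (‖A - B‖ ^ 2) ≤ ‖q‖ ^ 2 := by
  obtain ⟨f, μ, ν, hf⟩ := h.exists_isTriangleCircumcenter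
  exact hf.norm_sq_eq_circumradiusSq h ▸ hf.norm_sq_le hqA hqB

end Triangle

/-! ### The Voronoi cell -/

section VoronoiCell

variable {E : Type*} [NormedAddCommGroup E]

/-- The points of the simplex with vertices `0` and `s` that are at least as close to `0` as to
every other vertex. -/
def voronoiCell [NormedSpace ℝ E] (s : Set E) : Set E :=
  {x ∈ convexHull ℝ (insert 0 s) | ∀ a ∈ s, ‖x‖ ≤ dist x a}

variable [InnerProductSpace ℝ E]

lemma norm_le_dist_iff {x a : E} : ‖x‖ ≤ dist x a ↔ inner ℝ x a ≤ ‖a‖ ^ 2 / 2 := by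
  rw [← sq_le_sq₀ (norm_nonneg x) dist_nonneg, dist_eq_norm, norm_sub_sq_real]
  constructor <;> intro h <;> linarith

lemma convex_voronoiCell (s : Set E) : Convex ℝ (voronoiCell s) := by
  have heq : voronoiCell s =
      convexHull ℝ (insert 0 s) ∩ ⋂ a ∈ s, {x | inner ℝ x a ≤ ‖a‖ ^ 2 / 2} := by
    ext x
    simp only [voronoiCell, norm_le_dist_iff, Set.mem_inter_iff, Set.mem_iInter,
      Set.mem_ofPred_eq]
  have hhalf (a : E) : Convex ℝ {x : E | inner ℝ x a ≤ ‖a‖ ^ 2 / 2} := by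
    simpa only [innerₗ_apply_apply, real_inner_comm] using
      convex_halfSpace_le (innerₗ E a).isLinear (‖a‖ ^ 2 / 2)
  exact heq ▸ (convex_convexHull ℝ _).inter (convex_iInter₂ fun a _ ↦ hhalf a)

lemma zero_mem_voronoiCell (s : Set E) : 0 ∈ voronoiCell s :=
  ⟨subset_convexHull ℝ _ (Set.mem_insert _ _), fun a _ ↦ by simp⟩

lemma half_smul_mem_voronoiCell {s : Set E} {a : E} (ha : a ∈ s)
    (h : ∀ b ∈ s, inner ℝ a b ≤ ‖b‖ ^ 2) : (1 / 2 : ℝ) • a ∈ voronoiCell s := by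
  refine ⟨?_, fun b hb ↦ norm_le_dist_iff.2 ?_⟩
  · exact (convex_convexHull ℝ _).smul_mem_of_zero_mem
      (subset_convexHull ℝ _ (Set.mem_insert _ _))
      (subset_convexHull ℝ _ (Set.mem_insert_of_mem _ ha)) ⟨by norm_num, by norm_num⟩
  · rw [real_inner_smul_left]
    linarith [h b hb]

lemma isBounded_voronoiCell {s : Set E} (hs : s.Finite) : Bornology.IsBounded (voronoiCell s) :=
  (isBounded_convexHull.2 (hs.insert 0).isBounded).subset fun _ hx ↦ hx.1

/-- `q = a • A + b • B + c • C` is the circumcenter of the simplex `0, A, B, C`, which contains it.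
Equidistance of `q` from `0` and `A` is expressed as `⟪q, A⟫ = ‖A‖² / 2`. -/
structure IsContainedCircumcenter (A B C q : E) (a b c : ℝ) : Prop where
  eq_combination : q = a • A + b • B + c • C
  fst_nonneg : 0 ≤ a
  snd_nonneg : 0 ≤ b
  trd_nonneg : 0 ≤ c
  add_le_one : a + b + c ≤ 1
  inner_fst : inner ℝ q A = ‖A‖ ^ 2 / 2
  inner_snd : inner ℝ q B = ‖B‖ ^ 2 / 2
  inner_trd : inner ℝ q C = ‖C‖ ^ 2 / 2

namespace IsContainedCircumcenter

variable {A B C q f : E} {a b c μ ν : ℝ}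

lemma swap (h : IsContainedCircumcenter A B C q a b c) :
    IsContainedCircumcenter A C B q a c b where
  eq_combination := by rw [h.eq_combination, add_right_comm]
  fst_nonneg := h.fst_nonneg
  snd_nonneg := h.trd_nonneg
  trd_nonneg := h.snd_nonneg
  add_le_one := by linarith [h.add_le_one]
  inner_fst := h.inner_fst
  inner_snd := h.inner_trd
  inner_trd := h.inner_snd

lemma rotate (h : IsContainedCircumcenter A B C q a b c) :
    IsContainedCircumcenter B C A q b c a where
  eq_combination := by rw [h.eq_combination, add_assoc, add_comm]
  fst_nonneg := h.snd_nonneg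
  snd_nonneg := h.trd_nonneg
  trd_nonneg := h.fst_nonneg
  add_le_one := by linarith [h.add_le_one]
  inner_fst := h.inner_snd
  inner_snd := h.inner_trd
  inner_trd := h.inner_fst

lemma mem_voronoiCell (h : IsContainedCircumcenter A B C q a b c) : q ∈ voronoiCell {A, B, C} := by
  refine ⟨mem_convexHull_zero_triple.2 ⟨a, b, c, h.fst_nonneg, h.snd_nonneg, h.trd_nonneg,
    h.add_le_one, h.eq_combination.symm⟩, ?_⟩
  simp only [Set.forall_mem_insert, Set.mem_singleton_iff, forall_eq, norm_le_dist_iff]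
  exact ⟨h.inner_fst.le, h.inner_snd.le, h.inner_trd.le⟩

lemma inner_triangleCircumcenter_le (h : IsContainedCircumcenter A B C q a b c)
    (hf : IsTriangleCircumcenter A B f μ ν) : inner ℝ f C ≤ inner ℝ q C := by
  have horth : inner ℝ (q - f) f = 0 := by
    rw [inner_sub_left, hf.inner_eq_norm_sq h.inner_fst h.inner_snd, real_inner_self_eq_norm_sq,
      sub_self]
  have hA : inner ℝ (q - f) A = 0 := by rw [inner_sub_left, h.inner_fst, hf.inner_fst, sub_self]
  have hB : inner ℝ (q - f) B = 0 := by rw [inner_sub_left, h.inner_snd, hf.inner_snd, sub_self]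
  have hnorm : ‖q - f‖ ^ 2 = c * inner ℝ (q - f) C := by
    rw [← real_inner_self_eq_norm_sq]
    nth_rewrite 2 [h.eq_combination]
    rw [inner_sub_right, horth, inner_add_right, inner_add_right, real_inner_smul_right,
      real_inner_smul_right, real_inner_smul_right, hA, hB]
    ring
  rw [← sub_nonneg, ← inner_sub_left]
  rcases h.trd_nonneg.eq_or_lt with hc | hc
  · rw [← hc, zero_mul, sq_eq_zero_iff, norm_eq_zero] at hnorm
    rw [hnorm, inner_zero_left]
  · exact nonneg_of_mul_nonneg_right (hnorm ▸ sq_nonneg ‖q - f‖) hc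

lemma triangleCircumcenter_mem_voronoiCell (h : IsContainedCircumcenter A B C q a b c)
    (hf : IsTriangleCircumcenter A B f μ ν) : f ∈ voronoiCell {A, B, C} := by
  refine ⟨mem_convexHull_zero_triple.2 ⟨μ, ν, 0, hf.fst_nonneg, hf.snd_nonneg, le_rfl,
    by linarith [hf.add_le_one], by rw [hf.eq_combination, zero_smul, add_zero]⟩, ?_⟩
  simp only [Set.forall_mem_insert, Set.mem_singleton_iff, forall_eq, norm_le_dist_iff]
  exact ⟨hf.inner_fst.le, hf.inner_snd.le,
    (h.inner_triangleCircumcenter_le hf).trans h.inner_trd.le⟩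

end IsContainedCircumcenter

lemma IsModerateSimplex.half_smul_fst_mem_voronoiCell {A B C : E} (h : IsModerateSimplex A B C) :
    (1 / 2 : ℝ) • A ∈ voronoiCell {A, B, C} := by
  refine half_smul_mem_voronoiCell (Set.mem_insert _ _) ?_
  simp only [Set.forall_mem_insert, Set.mem_singleton_iff, forall_eq]
  exact ⟨(real_inner_self_eq_norm_sq A).le, h.face_fst_snd.inner_le_norm_snd_sq,
    h.face_fst_trd.inner_le_norm_snd_sq⟩

end VoronoiCell

section Faces

variable {A B C q f : E3} {a b c μ ν : ℝ}

lemma volumeReal_orthoscheme_face (hf : IsTriangleCircumcenter A B f μ ν)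
    (hq : IsContainedCircumcenter A B C q a b c) :
    volume.real (convexHull ℝ {0, (1 / 2 : ℝ) • A, f, q}) =
      ν * c / 2 * volume.real (convexHull ℝ {0, A, B, C}) := by
  have hnonneg : 0 ≤ 1 / 2 * ν * c :=
    mul_nonneg (mul_nonneg (by norm_num) hf.snd_nonneg) hq.trd_nonneg
  rw [hf.eq_combination, hq.eq_combination, volumeReal_convexHull_flag, abs_of_nonneg hnonneg]
  ring

lemma volumeReal_closedBall_inter_hull_half_le (hf : IsTriangleCircumcenter A B f μ ν)
    (hq : IsContainedCircumcenter A B C q a b c) {β γ : ℝ} (hβ : 0 ≤ β) (hβγ : β ≤ γ)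
    (hA : 4 ≤ ‖A‖ ^ 2) (hfβ : 1 + β ≤ ‖f‖ ^ 2) (hqγ : 1 + γ ≤ ‖q‖ ^ 2) :
    volume.real (Metric.closedBall (0 : E3) 1 ∩ PointedCone.hull ℝ {A, f, q}) ≤
      rogersDensity β γ * (ν * c / 2 * volume.real (convexHull ℝ {0, A, B, C})) := by
  rw [← hull_insert_smul one_half_pos A, ← volumeReal_orthoscheme_face hf hq]
  refine volumeReal_closedBall_inter_hull_le_of_isOrthoscheme
    (hf.isOrthoscheme hq.inner_fst hq.inner_snd) hβ hβγ ?_ hfβ hqγ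
  rw [norm_smul, mul_pow, norm_eq_abs, sq_abs]
  linarith

lemma le_volumeReal_voronoiCell_inter_hull_half (hABC : IsModerateSimplex A B C)
    (hf : IsTriangleCircumcenter A B f μ ν) (hq : IsContainedCircumcenter A B C q a b c) :
    ν * c / 2 * volume.real (convexHull ℝ {0, A, B, C}) ≤
      volume.real (voronoiCell {A, B, C} ∩ PointedCone.hull ℝ {A, f, q}) := by
  rw [← hull_insert_smul one_half_pos A, ← volumeReal_orthoscheme_face hf hq]
  exact measureReal_mono (convexHull_zero_triple_subset_inter_hull (convex_voronoiCell _)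
    (zero_mem_voronoiCell _) hABC.half_smul_fst_mem_voronoiCell
    (hq.triangleCircumcenter_mem_voronoiCell hf) hq.mem_voronoiCell)
    (measure_ne_top_of_subset Set.inter_subset_left
      (isBounded_voronoiCell (Set.toFinite _)).measure_lt_top.ne)

lemma measureReal_inter_hull_face (hf : IsTriangleCircumcenter A B f μ ν) {X : Set E3}
    (hX : NullMeasurableSet X) (hfin : volume X ≠ ⊤) :
    volume.real (X ∩ PointedCone.hull ℝ {A, B, q}) =
      volume.real (X ∩ PointedCone.hull ℝ {A, f, q}) +
        volume.real (X ∩ PointedCone.hull ℝ {B, f, q}) :=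
  measureReal_inter_hull_insert_insert volume hX hfin hf.fst_nonneg hf.snd_nonneg
    (by linarith [hf.half_le_add]) hf.eq_combination (span_pair_ne_top (by simp) f q)

theorem exists_volume_estimate_over_face (hABC : IsModerateSimplex A B C)
    (hq : IsContainedCircumcenter A B C q a b c) {β γ : ℝ} (hβ : 0 ≤ β) (hβγ : β ≤ γ)
    (hAB : 1 + β ≤ circumradiusSq (‖A‖ ^ 2) (‖B‖ ^ 2) (‖A - B‖ ^ 2)) (hqγ : 1 + γ ≤ ‖q‖ ^ 2) :
    ∃ v, c / 4 * volume.real (convexHull ℝ {0, A, B, C}) ≤ v ∧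
      v ≤ c / 2 * volume.real (convexHull ℝ {0, A, B, C}) ∧
      volume.real (Metric.closedBall (0 : E3) 1 ∩ PointedCone.hull ℝ {A, B, q}) ≤
        rogersDensity β γ * v ∧
      v ≤ volume.real (voronoiCell {A, B, C} ∩ PointedCone.hull ℝ {A, B, q}) := by
  obtain ⟨f, μ, ν, hf⟩ := hABC.face_fst_snd.exists_isTriangleCircumcenter
  rw [← hf.norm_sq_eq_circumradiusSq hABC.face_fst_snd] at hAB
  have hBAC : IsModerateSimplex B A C := hABC.rotate.swap
  have hq' : IsContainedCircumcenter B A C q b a c := hq.rotate.swap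
  have hcell : voronoiCell {B, A, C} = voronoiCell {A, B, C} := by rw [Set.insert_comm]
  have hsimplex : volume.real (convexHull ℝ {0, B, A, C}) =
      volume.real (convexHull ℝ {0, A, B, C}) := by rw [Set.insert_comm B]
  set V := volume.real (convexHull ℝ {0, A, B, C})
  have hcV : 0 ≤ c * V := mul_nonneg hq.trd_nonneg measureReal_nonneg
  have hballA := volumeReal_closedBall_inter_hull_half_le hf hq hβ hβγ
    hABC.face_fst_snd.norm_fst_sq_mem.1 hAB hqγ
  have hballB := volumeReal_closedBall_inter_hull_half_le hf.symm hq' hβ hβγ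
    hBAC.face_fst_snd.norm_fst_sq_mem.1 hAB hqγ
  have hcellA := le_volumeReal_voronoiCell_inter_hull_half hABC hf hq
  have hcellB := le_volumeReal_voronoiCell_inter_hull_half hBAC hf.symm hq'
  rw [hsimplex] at hballB hcellB
  rw [hcell] at hcellB
  refine ⟨(μ + ν) * (c * V) / 2, ?_, ?_, ?_, ?_⟩
  · linarith [mul_le_mul_of_nonneg_right hf.half_le_add hcV]
  · linarith [mul_le_mul_of_nonneg_right hf.add_le_one hcV]
  · rw [measureReal_inter_hull_face hf measurableSet_closedBall.nullMeasurableSet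
      measure_closedBall_lt_top.ne]
    linarith
  · rw [measureReal_inter_hull_face hf ((convex_voronoiCell _).nullMeasurableSet volume)
      (isBounded_voronoiCell (Set.toFinite _)).measure_lt_top.ne]
    linarith

end Faces

/-! ### The average density -/

section MainEstimate

namespace IsContainedCircumcenter

variable {E : Type*} [NormedAddCommGroup E] [InnerProductSpace ℝ E] {A B C q : E} {a b c : ℝ}

lemma sum_mul_norm_sub_sq (h : IsContainedCircumcenter A B C q a b c) :
    a * ‖A - C‖ ^ 2 + b * ‖B - C‖ ^ 2 + (1 - a - b - c) * ‖C‖ ^ 2 = 2 * ‖q‖ ^ 2 := by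
  have hinner (x : E) :
      inner ℝ q x = a * inner ℝ A x + b * inner ℝ B x + c * inner ℝ C x := by
    rw [h.eq_combination, inner_add_left, inner_add_left, real_inner_smul_left,
      real_inner_smul_left, real_inner_smul_left]
  have hnorm := hinner q
  have hC := hinner C
  rw [real_inner_self_eq_norm_sq, real_inner_comm, h.inner_fst, real_inner_comm, h.inner_snd,
    real_inner_comm, h.inner_trd] at hnorm
  rw [h.inner_trd, real_inner_self_eq_norm_sq] at hC
  rw [norm_sub_sq_real, norm_sub_sq_real]
  linear_combination -2 * hnorm + 2 * hC

lemma mul_fst_le (h : IsContainedCircumcenter A B C q a b c) (hABC : IsModerateSimplex A B C)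
    (hAC : 6.3001 ≤ ‖A - C‖ ^ 2) : 2.3001 * a ≤ 4 * c + (2 * ‖q‖ ^ 2 - 4) := by
  have hA := mul_le_mul_of_nonneg_left hAC h.fst_nonneg
  have hB := mul_le_mul_of_nonneg_left hABC.face_snd_trd.norm_sub_sq_mem.1 h.snd_nonneg
  have hC := mul_le_mul_of_nonneg_left hABC.face_snd_trd.norm_snd_sq_mem.1
    (by linarith [h.add_le_one] : 0 ≤ 1 - a - b - c)
  linarith [h.sum_mul_norm_sub_sq]

lemma snd_add_trd_pos (h : IsContainedCircumcenter A B C q a b c)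
    (hABC : IsModerateSimplex A B C) (hAC : 6.3001 ≤ ‖A - C‖ ^ 2) : 0 < b + c := by
  by_contra! hle
  have hb : b = 0 := by linarith [h.snd_nonneg, h.trd_nonneg]
  have hc : c = 0 := by linarith [h.snd_nonneg, h.trd_nonneg]
  have hq : q = a • A := by rw [h.eq_combination, hb, hc, zero_smul, zero_smul, add_zero, add_zero]
  have hA := h.inner_fst
  have hC := h.inner_trd
  rw [hq, real_inner_smul_left, real_inner_self_eq_norm_sq] at hA
  rw [hq, real_inner_smul_left] at hC
  have ha : a = 1 / 2 := by
    have hA₀ : ‖A‖ ^ 2 ≠ 0 := by linarith [hABC.face_fst_snd.norm_fst_sq_mem.1]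
    exact mul_right_cancel₀ hA₀ (by linarith)
  rw [ha] at hC
  linarith [norm_sub_sq_real A C, hABC.face_fst_snd.norm_fst_sq_mem.2,
    hABC.face_fst_trd.norm_snd_sq_mem.1]

/-- If `‖q‖² ≤ 2` then the weight `a` of the vertex opposite to the face `0, B, C` is bounded in
terms of `c`, which compensates for the large density of that face. -/
lemma exists_rogersDensity_sub_le (h : IsContainedCircumcenter A B C q a b c)
    (hABC : IsModerateSimplex A B C) (hAC : 6.3001 ≤ ‖A - C‖ ^ 2) (hq : 1.87 ≤ ‖q‖ ^ 2) :
    ∃ γ κ, 1 / 3 ≤ γ ∧ 1 + γ ≤ ‖q‖ ^ 2 ∧ 0 ≤ κ ∧ κ * a < (b + c) / 2 ∧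
      rogersDensity (1 / 3) γ - δoct ≤ κ * (δoct - rogersDensity 0.64 0.87) := by
  have hbc := h.snd_add_trd_pos hABC hAC
  rcases le_or_gt (‖q‖ ^ 2) 2 with hle | hgt
  · refine ⟨0.87, 0.2875, by norm_num, by linarith, by norm_num, ?_, rogersDensity_sub_δoct_le⟩
    linarith [h.mul_fst_le hABC hAC, h.fst_nonneg, h.snd_nonneg]
  · refine ⟨1, 0, by norm_num, by linarith, le_rfl, by linarith, ?_⟩
    rw [rogersDensity_one_third_one, sub_self, zero_mul]

end IsContainedCircumcenter

lemma δoct_nonneg : 0 ≤ δoct :=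
  rogersDensity_one_third_one ▸ rogersDensity_nonneg (by norm_num) 1

lemma IsModerateTriangle.four_thirds_le_circumradiusSq {E : Type*} [NormedAddCommGroup E]
    {A B : E} (h : IsModerateTriangle A B) :
    4 / 3 ≤ circumradiusSq (‖A‖ ^ 2) (‖B‖ ^ 2) (‖A - B‖ ^ 2) :=
  calc
    4 / 3 = circumradiusSq 4 4 4 := by norm_num [circumradiusSq, heron]
    _ ≤ circumradiusSq (‖A‖ ^ 2) (‖B‖ ^ 2) (‖A - B‖ ^ 2) :=
      h.circumradiusSq_mono le_rfl le_rfl le_rfl h.norm_fst_sq_mem.1 h.norm_snd_sq_mem.1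
        h.norm_sub_sq_mem.1

/-- The volumes `v₁`, `v₂` of the sparse parts are large enough, compared to the volume `v₃` of the
dense part, for the average density to stay below `δoct`. -/
lemma rogersDensity_mul_add_lt {γ κ a b c V v₁ v₂ v₃ : ℝ} (hV : 0 < V) (hκ : 0 ≤ κ)
    (hκa : κ * a < (b + c) / 2)
    (hγ : rogersDensity (1 / 3) γ - δoct ≤ κ * (δoct - rogersDensity 0.64 0.87))
    (hv₁ : c / 4 * V ≤ v₁) (hv₂ : b / 4 * V ≤ v₂) (hv₃ : v₃ ≤ a / 2 * V) (hv₃₀ : 0 ≤ v₃) :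
    rogersDensity 0.64 0.87 * (v₁ + v₂) + rogersDensity (1 / 3) γ * v₃ <
      δoct * (v₁ + v₂ + v₃) := by
  have hgap : 0 < δoct - rogersDensity 0.64 0.87 := sub_pos.2 rogersDensity_lt_δoct
  have hexcess : (rogersDensity (1 / 3) γ - δoct) * v₃ <
      (δoct - rogersDensity 0.64 0.87) * (v₁ + v₂) :=
    calc
      (rogersDensity (1 / 3) γ - δoct) * v₃
          ≤ κ * (δoct - rogersDensity 0.64 0.87) * v₃ := by gcongr
      _ ≤ κ * (δoct - rogersDensity 0.64 0.87) * (a / 2 * V) := by gcongr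
      _ = (δoct - rogersDensity 0.64 0.87) * (κ * a * (V / 2)) := by ring
      _ < (δoct - rogersDensity 0.64 0.87) * ((b + c) / 2 * (V / 2)) := by gcongr
      _ ≤ (δoct - rogersDensity 0.64 0.87) * (v₁ + v₂) := by gcongr; linarith
  linarith

variable {A B C q : E3} {a b c : ℝ}

lemma volumeReal_closedBall_inter_hull_lt_of_circumradiusSq
    (h : IsContainedCircumcenter A B C q a b c) (hABC : IsModerateSimplex A B C)
    (hV : 0 < volume.real (convexHull ℝ {0, A, B, C})) (hAC : 6.3001 ≤ ‖A - C‖ ^ 2)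
    (hrAB : 1.64 ≤ circumradiusSq (‖A‖ ^ 2) (‖B‖ ^ 2) (‖A - B‖ ^ 2))
    (hrAC : 1.64 ≤ circumradiusSq (‖A‖ ^ 2) (‖C‖ ^ 2) (‖A - C‖ ^ 2)) (hq : 1.87 ≤ ‖q‖ ^ 2) :
    volume.real (Metric.closedBall (0 : E3) 1 ∩ PointedCone.hull ℝ {A, B, C}) <
      δoct * volume.real (voronoiCell {A, B, C}) := by
  have hACB : ({A, C, B} : Set E3) = {A, B, C} := by rw [Set.pair_comm]
  have hBCA : ({B, C, A} : Set E3) = {A, B, C} := by rw [Set.pair_comm, Set.insert_comm]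
  obtain ⟨γ, κ, hγ, hqγ, hκ, hκa, hdens⟩ := h.exists_rogersDensity_sub_le hABC hAC hq
  obtain ⟨v₁, hv₁, -, hball₁, hcell₁⟩ := exists_volume_estimate_over_face hABC h
    (β := 0.64) (γ := 0.87) (by norm_num) (by norm_num) (by linarith) (by linarith)
  obtain ⟨v₂, hv₂, -, hball₂, hcell₂⟩ := exists_volume_estimate_over_face hABC.swap h.swap
    (β := 0.64) (γ := 0.87) (by norm_num) (by norm_num) (by linarith) (by linarith)
  obtain ⟨v₃, hv₃, hv₃', hball₃, hcell₃⟩ := exists_volume_estimate_over_face hABC.rotate h.rotate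
    (by norm_num) hγ (by linarith [hABC.face_snd_trd.four_thirds_le_circumradiusSq]) hqγ
  rw [hACB] at hv₂ hcell₂
  rw [hBCA] at hv₃ hv₃' hcell₃
  have hv₃₀ : 0 ≤ v₃ := le_trans (by have := h.fst_nonneg; positivity) hv₃
  have hsplit {X : Set E3} (hX : NullMeasurableSet X) (hXfin : volume X ≠ ⊤) :=
    measureReal_inter_hull_triple volume hX hXfin (by simp) h.fst_nonneg h.snd_nonneg h.trd_nonneg
      (h.snd_add_trd_pos hABC hAC) h.eq_combination
  have hfin : volume (voronoiCell {A, B, C}) ≠ ⊤ :=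
    (isBounded_voronoiCell (Set.toFinite _)).measure_lt_top.ne
  have hcell : v₁ + v₂ + v₃ ≤ volume.real (voronoiCell {A, B, C}) := by
    have hle := measureReal_mono (μ := volume)
      (Set.inter_subset_left (t := (PointedCone.hull ℝ {A, B, C} : Set E3))) hfin
    rw [hsplit ((convex_voronoiCell _).nullMeasurableSet volume) hfin] at hle
    linarith
  calc
    volume.real (Metric.closedBall (0 : E3) 1 ∩ PointedCone.hull ℝ {A, B, C})
        ≤ rogersDensity 0.64 0.87 * (v₁ + v₂) + rogersDensity (1 / 3) γ * v₃ := by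
      rw [hsplit measurableSet_closedBall.nullMeasurableSet measure_closedBall_lt_top.ne]
      linarith
    _ < δoct * (v₁ + v₂ + v₃) := rogersDensity_mul_add_lt hV hκ hκa hdens hv₁ hv₂ hv₃' hv₃₀
    _ ≤ δoct * volume.real (voronoiCell {A, B, C}) :=
      mul_le_mul_of_nonneg_left hcell δoct_nonneg

end MainEstimate

section LongEdges

variable {E : Type*} [NormedAddCommGroup E]

lemma IsModerateTriangle.circumradiusSq_ge_of_fst_or_sub {A B : E} (h : IsModerateTriangle A B)
    (hlong : 6.3001 ≤ ‖A‖ ^ 2 ∨ 6.3001 ≤ ‖A - B‖ ^ 2) :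
    1.64 ≤ circumradiusSq (‖A‖ ^ 2) (‖B‖ ^ 2) (‖A - B‖ ^ 2) := by
  rcases hlong with hA | hAB
  · exact le_trans (by norm_num [circumradiusSq, heron]) (h.circumradiusSq_mono (x := 6.3001)
      (by norm_num) le_rfl le_rfl hA h.norm_snd_sq_mem.1 h.norm_sub_sq_mem.1)
  · exact le_trans (by norm_num [circumradiusSq, heron]) (h.circumradiusSq_mono (z := 6.3001)
      le_rfl le_rfl (by norm_num) h.norm_fst_sq_mem.1 h.norm_snd_sq_mem.1 hAB)

lemma IsModerateTriangle.circumradiusSq_ge_of_fst_of_sub {A B : E} (h : IsModerateTriangle A B)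
    (hA : 6.3001 ≤ ‖A‖ ^ 2) (hAB : 6.3001 ≤ ‖A - B‖ ^ 2) :
    1.87 ≤ circumradiusSq (‖A‖ ^ 2) (‖B‖ ^ 2) (‖A - B‖ ^ 2) :=
  le_trans (by norm_num [circumradiusSq, heron]) (h.circumradiusSq_mono (x := 6.3001) (z := 6.3001)
    (by norm_num) le_rfl (by norm_num) hA h.norm_snd_sq_mem.1 hAB)

lemma IsModerateSimplex.opposite_face {A B C : E} (h : IsModerateSimplex A B C) :
    IsModerateTriangle (B - A) (C - A) where
  norm_fst_sq_mem := norm_sub_rev A B ▸ h.face_fst_snd.norm_sub_sq_mem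
  norm_snd_sq_mem := norm_sub_rev A C ▸ h.face_fst_trd.norm_sub_sq_mem
  norm_sub_sq_mem := (sub_sub_sub_cancel_right B C A).symm ▸ h.face_snd_trd.norm_sub_sq_mem

lemma inner_sub_sub_of_inner_eq [InnerProductSpace ℝ E] {q A B : E}
    (hA : inner ℝ q A = ‖A‖ ^ 2 / 2) (hB : inner ℝ q B = ‖B‖ ^ 2 / 2) :
    inner ℝ (q - A) (B - A) = ‖B - A‖ ^ 2 / 2 := by
  rw [inner_sub_left, inner_sub_right, inner_sub_right, hA, hB, real_inner_self_eq_norm_sq,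
    norm_sub_sq_real, real_inner_comm]
  ring

lemma IsContainedCircumcenter.norm_sq_ge [InnerProductSpace ℝ E] {A B C q : E} {a b c : ℝ}
    (h : IsContainedCircumcenter A B C q a b c) (hABC : IsModerateSimplex A B C)
    (hAC : 6.3001 ≤ ‖A - C‖ ^ 2) (hlong : 6.3001 ≤ ‖A‖ ^ 2 ∨ 6.3001 ≤ ‖A - B‖ ^ 2) :
    1.87 ≤ ‖q‖ ^ 2 := by
  rcases hlong with hA | hAB
  · exact (hABC.face_fst_trd.circumradiusSq_ge_of_fst_of_sub hA hAC).trans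
      (hABC.face_fst_trd.circumradiusSq_le_norm_sq h.inner_fst h.inner_trd)
  · have hface : IsModerateTriangle (A - B) (C - B) := hABC.rotate.swap.opposite_face
    have hqB : ‖q - B‖ ^ 2 = ‖q‖ ^ 2 := by rw [norm_sub_sq_real, h.inner_snd]; ring
    rw [← hqB]
    exact (hface.circumradiusSq_ge_of_fst_of_sub hAB
      (by rwa [sub_sub_sub_cancel_right])).trans (hface.circumradiusSq_le_norm_sq
      (inner_sub_sub_of_inner_eq h.inner_snd h.inner_fst)
      (inner_sub_sub_of_inner_eq h.inner_snd h.inner_trd))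

theorem volumeReal_closedBall_inter_hull_lt {A B C q : E3} {a b c : ℝ}
    (h : IsContainedCircumcenter A B C q a b c) (hABC : IsModerateSimplex A B C)
    (hV : 0 < volume.real (convexHull ℝ {0, A, B, C})) (hAC : 6.3001 ≤ ‖A - C‖ ^ 2)
    (hlong : 6.3001 ≤ ‖A‖ ^ 2 ∨ 6.3001 ≤ ‖A - B‖ ^ 2) :
    volume.real (Metric.closedBall (0 : E3) 1 ∩ PointedCone.hull ℝ {A, B, C}) <
      δoct * volume.real (voronoiCell {A, B, C}) :=
  volumeReal_closedBall_inter_hull_lt_of_circumradiusSq h hABC hV hAC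
    (hABC.face_fst_snd.circumradiusSq_ge_of_fst_or_sub hlong)
    (hABC.face_fst_trd.circumradiusSq_ge_of_fst_or_sub (Or.inr hAC)) (h.norm_sq_ge hABC hAC hlong)

end LongEdges

/-! ### Translation of the apex to the origin -/

section Translation

variable {E : Type*} [AddCommGroup E] [Module ℝ E]

open scoped Pointwise in
lemma add_mem_convexHull_insert_iff {p₀ p₁ p₂ p₃ x : E} :
    p₀ + x ∈ convexHull ℝ {p₀, p₁, p₂, p₃} ↔
      x ∈ convexHull ℝ {0, p₁ - p₀, p₂ - p₀, p₃ - p₀} := by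
  have hvadd : ({p₀, p₁, p₂, p₃} : Set E) = p₀ +ᵥ ({0, p₁ - p₀, p₂ - p₀, p₃ - p₀} : Set E) := by
    simp only [← Set.image_vadd, Set.image_insert_eq, Set.image_singleton, vadd_eq_add, add_zero,
      add_sub_cancel]
  rw [hvadd, convexHull_vadd, ← vadd_eq_add, Set.vadd_mem_vadd_set_iff]

lemma mem_hull_triple_iff_exists_smul {u v w y : E} :
    y ∈ PointedCone.hull ℝ {u, v, w} ↔
      ∃ x ∈ convexHull ℝ {0, u, v, w}, ∃ t : ℝ, 0 ≤ t ∧ y = t • x := by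
  constructor
  · rw [mem_hull_triple]
    rintro ⟨a, b, c, ha, hb, hc, rfl⟩
    have ht : 0 < a + b + c + 1 := by positivity
    refine ⟨(a + b + c + 1)⁻¹ • (a • u + b • v + c • w), mem_convexHull_zero_triple.2
      ⟨a / (a + b + c + 1), b / (a + b + c + 1), c / (a + b + c + 1), by positivity,
        by positivity, by positivity, ?_, by module⟩, a + b + c + 1, ht.le,
      (smul_inv_smul₀ ht.ne' _).symm⟩
    rw [← add_div, ← add_div, div_le_one ht]
    linarith
  · rintro ⟨_, hx, t, ht, rfl⟩
    obtain ⟨a, b, c, ha, hb, hc, -, rfl⟩ := mem_convexHull_zero_triple.1 hx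
    exact mem_hull_triple.2 ⟨t * a, t * b, t * c, by positivity, by positivity, by positivity,
      by module⟩

end Translation

theorem vor_eq (p₀ p₁ p₂ p₃ : E3) :
    vor p₀ p₁ p₂ p₃ = 4 * (-δoct * volume.real (voronoiCell {p₁ - p₀, p₂ - p₀, p₃ - p₀}) +
      volume.real (Metric.closedBall (0 : E3) 1 ∩
        PointedCone.hull ℝ {p₁ - p₀, p₂ - p₀, p₃ - p₀})) := by
  rw [vor, ← measure_preimage_add volume p₀, ← measure_preimage_add volume p₀ (_ ∩ _)]
  congr 4
  · congr 2
    ext x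
    have hdist (p : E3) : dist (p₀ + x) p = dist x (p - p₀) := by
      rw [dist_eq_norm, dist_eq_norm, sub_sub_eq_add_sub, add_comm]
    simp only [voronoiCell, Set.mem_preimage, Set.mem_ofPred_eq, add_mem_convexHull_insert_iff,
      Set.forall_mem_insert, Set.mem_singleton_iff, forall_eq, hdist, sub_self, dist_zero_right]
  · ext x
    have hhull (P : E3 → Prop) : (∃ y ∈ convexHull ℝ {p₀, p₁, p₂, p₃}, P (y - p₀)) ↔
        ∃ z ∈ convexHull ℝ {0, p₁ - p₀, p₂ - p₀, p₃ - p₀}, P z := by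
      simp only [← add_mem_convexHull_insert_iff (p₀ := p₀)]
      exact ⟨fun ⟨y, hy, hP⟩ ↦ ⟨y - p₀, by rwa [add_sub_cancel], hP⟩,
        fun ⟨z, hz, hP⟩ ↦ ⟨p₀ + z, hz, by rwa [add_sub_cancel_left]⟩⟩
    simp only [Set.mem_preimage, Set.mem_inter_iff, Set.mem_ofPred_eq, SetLike.mem_coe,
      mem_hull_triple_iff_exists_smul, mem_closedBall_iff_norm, add_sub_cancel_left, add_right_inj,
      sub_zero, hhull fun z ↦ ∃ t : ℝ, 0 ≤ t ∧ x = t • z]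

lemma vor_swap (p₀ p₁ p₂ p₃ : E3) : vor p₀ p₃ p₂ p₁ = vor p₀ p₁ p₂ p₃ := by
  have hset {A B C : E3} : ({C, B, A} : Set E3) = {A, B, C} := by
    rw [Set.insert_comm, Set.pair_comm, Set.insert_comm]
  rw [vor_eq, vor_eq, hset]

lemma ContainsCircumcenter.swap {p₀ p₁ p₂ p₃ : E3} (h : ContainsCircumcenter p₀ p₁ p₂ p₃) :
    ContainsCircumcenter p₀ p₃ p₂ p₁ := by
  obtain ⟨q, hq, h₁, h₂, h₃⟩ := h
  refine ⟨q, ?_, h₃, h₂, h₁⟩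
  rwa [Set.insert_comm p₃, Set.pair_comm p₃, Set.insert_comm p₂]

lemma ContainsCircumcenter.exists_isContainedCircumcenter {p₀ p₁ p₂ p₃ : E3}
    (h : ContainsCircumcenter p₀ p₁ p₂ p₃) :
    ∃ q a b c, IsContainedCircumcenter (p₁ - p₀) (p₂ - p₀) (p₃ - p₀) q a b c := by
  obtain ⟨q, hq, h₁, h₂, h₃⟩ := h
  rw [← add_sub_cancel p₀ q, add_mem_convexHull_insert_iff, mem_convexHull_zero_triple] at hq
  obtain ⟨a, b, c, ha, hb, hc, hsum, hq⟩ := hq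
  have hinner {p : E3} (hp : dist q p₀ = dist q p) :
      inner ℝ (q - p₀) (p - p₀) = ‖p - p₀‖ ^ 2 / 2 := by
    have hsub := norm_sub_sq_real (q - p₀) (p - p₀)
    rw [sub_sub_sub_cancel_right, ← dist_eq_norm q p, ← hp, dist_eq_norm q p₀] at hsub
    linarith
  exact ⟨q - p₀, a, b, c, hq.symm, ha, hb, hc, hsum, hinner h₁, hinner h₂, hinner h₃⟩

lemma volumeReal_convexHull_zero_sub_eq (p₀ p₁ p₂ p₃ : E3) :
    volume.real (convexHull ℝ {0, p₁ - p₀, p₂ - p₀, p₃ - p₀}) =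
      volume.real (convexHull ℝ {p₀, p₁, p₂, p₃}) := by
  rw [measureReal_def, measureReal_def,
    ← measure_preimage_add volume p₀ (convexHull ℝ {p₀, p₁, p₂, p₃})]
  congr 2
  ext x
  exact add_mem_convexHull_insert_iff.symm

lemma isModerateTriangle_sub {p₀ p₁ p₂ : E3} (h₁ : dist p₀ p₁ ∈ Set.Icc 2 (2 * √2))
    (h₂ : dist p₀ p₂ ∈ Set.Icc 2 (2 * √2)) (h₁₂ : dist p₁ p₂ ∈ Set.Icc 2 (2 * √2)) :
    IsModerateTriangle (p₁ - p₀) (p₂ - p₀) := by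
  have hsq {p p' : E3} (h : dist p p' ∈ Set.Icc 2 (2 * √2)) :
      ‖p - p'‖ ^ 2 ∈ Set.Icc (4 : ℝ) 8 := by
    rw [← dist_eq_norm]
    have hle := pow_le_pow_left₀ dist_nonneg h.2 2
    rw [mul_pow, Real.sq_sqrt zero_le_two] at hle
    exact ⟨by nlinarith [h.1], by linarith⟩
  exact ⟨hsq (dist_comm p₀ p₁ ▸ h₁), hsq (dist_comm p₀ p₂ ▸ h₂),
    by simpa only [sub_sub_sub_cancel_right] using hsq h₁₂⟩

lemma vor_neg_of_long_edges_at_fst {p₀ p₁ p₂ p₃ : E3}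
    (hindep : AffineIndependent ℝ ![p₀, p₁, p₂, p₃]) (hcc : ContainsCircumcenter p₀ p₁ p₂ p₃)
    (h₀₁ : dist p₀ p₁ ∈ Set.Icc 2 (2 * √2)) (h₀₂ : dist p₀ p₂ ∈ Set.Icc 2 (2 * √2))
    (h₀₃ : dist p₀ p₃ ∈ Set.Icc 2 (2 * √2)) (h₁₂ : dist p₁ p₂ ∈ Set.Icc 2 (2 * √2))
    (h₁₃ : dist p₁ p₃ ∈ Set.Icc 2 (2 * √2)) (h₂₃ : dist p₂ p₃ ∈ Set.Icc 2 (2 * √2))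
    (hlong₁₃ : 2.51 ≤ dist p₁ p₃) (hlong : 2.51 ≤ dist p₀ p₁ ∨ 2.51 ≤ dist p₁ p₂) :
    vor p₀ p₁ p₂ p₃ < 0 := by
  obtain ⟨q, a, b, c, hq⟩ := hcc.exists_isContainedCircumcenter
  have hmod : IsModerateSimplex (p₁ - p₀) (p₂ - p₀) (p₃ - p₀) :=
    ⟨isModerateTriangle_sub h₀₁ h₀₂ h₁₂, isModerateTriangle_sub h₀₁ h₀₃ h₁₃,
      isModerateTriangle_sub h₀₂ h₀₃ h₂₃⟩
  have hsq {p p' : E3} (h : 2.51 ≤ dist p p') : 6.3001 ≤ ‖p - p'‖ ^ 2 := by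
    rw [← dist_eq_norm]
    nlinarith
  have hlt := volumeReal_closedBall_inter_hull_lt hq hmod
    (volumeReal_convexHull_zero_sub_eq p₀ p₁ p₂ p₃ ▸ volumeReal_convexHull_pos hindep)
    (by simpa only [sub_sub_sub_cancel_right] using hsq hlong₁₃)
    (hlong.imp (fun h ↦ hsq (dist_comm p₀ p₁ ▸ h))
      fun h ↦ by simpa only [sub_sub_sub_cancel_right] using hsq h)
  rw [vor_eq]
  linarith

theorem vor_neg_several_long_edges_general (p₀ p₁ p₂ p₃ : E3)
    (hindep : AffineIndependent ℝ ![p₀, p₁, p₂, p₃]) (hcc : ContainsCircumcenter p₀ p₁ p₂ p₃)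
    (h₀₁ : dist p₀ p₁ ∈ Set.Icc 2 (2 * √2)) (h₀₂ : dist p₀ p₂ ∈ Set.Icc 2 (2 * √2))
    (h₀₃ : dist p₀ p₃ ∈ Set.Icc 2 (2 * √2)) (h₁₂ : dist p₁ p₂ ∈ Set.Icc 2 (2 * √2))
    (h₁₃ : dist p₁ p₃ ∈ Set.Icc 2 (2 * √2)) (h₂₃ : dist p₂ p₃ ∈ Set.Icc 2 (2 * √2))
    (hlong₁₃ : 2.51 ≤ dist p₁ p₃)
    (hlong : 2.51 ≤ dist p₀ p₁ ∨ 2.51 ≤ dist p₁ p₂ ∨ 2.51 ≤ dist p₀ p₃ ∨ 2.51 ≤ dist p₂ p₃) :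
    vor p₀ p₁ p₂ p₃ < 0 := by
  rcases or_assoc.2 hlong with h | h
  · exact vor_neg_of_long_edges_at_fst hindep hcc h₀₁ h₀₂ h₀₃ h₁₂ h₁₃ h₂₃ hlong₁₃ h
  · have hindep' : AffineIndependent ℝ ![p₀, p₃, p₂, p₁] := by
      convert hindep.comp_embedding (Equiv.swap (1 : Fin 4) 3).toEmbedding using 1
      ext1 i
      fin_cases i <;> rfl
    simp only [dist_comm p₁ p₂, dist_comm p₁ p₃, dist_comm p₂ p₃] at h h₁₂ h₁₃ h₂₃ hlong₁₃
    rw [← vor_swap]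
    exact vor_neg_of_long_edges_at_fst hindep' hcc.swap h₀₃ h₀₂ h₀₁ h₂₃ h₁₃ h₁₂ hlong₁₃ h

/-- Calculation 4.5.2, cells (8)–(11): Voronoi scoring of small simplices with several
long edges is negative. -/
theorem vor_neg_several_long_edges (p₀ p₁ p₂ p₃ : E3)
    (hindep : AffineIndependent ℝ ![p₀, p₁, p₂, p₃])
    (hsmall : IsSmall p₀ p₁ p₂ p₃)
    (hcc : ContainsCircumcenter p₀ p₁ p₂ p₃)
    (hcase : (dist p₀ p₁ ∈ Set.Icc (2.51 : ℝ) (2 * Real.sqrt 2) ∧ dist p₁ p₃ ∈ Set.Icc (2.51 : ℝ) (2 * Real.sqrt 2) ∧ dist p₀ p₂ ∈ Set.Icc (2 : ℝ) (2.51) ∧ dist p₀ p₃ ∈ Set.Icc (2 : ℝ) (2.51) ∧ dist p₂ p₃ ∈ Set.Icc (2 : ℝ) (2.51) ∧ dist p₁ p₂ ∈ Set.Icc (2 : ℝ) (2.51)) ∨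
      (dist p₀ p₁ ∈ Set.Icc (2.51 : ℝ) (2 * Real.sqrt 2) ∧ dist p₁ p₃ ∈ Set.Icc (2.51 : ℝ) (2 * Real.sqrt 2) ∧ dist p₁ p₂ ∈ Set.Icc (2.51 : ℝ) (2 * Real.sqrt 2) ∧ dist p₀ p₂ ∈ Set.Icc (2 : ℝ) (2.51) ∧ dist p₀ p₃ ∈ Set.Icc (2 : ℝ) (2.51) ∧ dist p₂ p₃ ∈ Set.Icc (2 : ℝ) (2.51)) ∨
      (dist p₂ p₃ ∈ Set.Icc (2.51 : ℝ) (2 * Real.sqrt 2) ∧ dist p₁ p₃ ∈ Set.Icc (2.51 : ℝ) (2 * Real.sqrt 2) ∧ dist p₀ p₁ ∈ Set.Icc (2 : ℝ) (2.51) ∧ dist p₀ p₂ ∈ Set.Icc (2 : ℝ) (2.51) ∧ dist p₀ p₃ ∈ Set.Icc (2 : ℝ) (2.51) ∧ dist p₁ p₂ ∈ Set.Icc (2 : ℝ) (2.51)) ∨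
      (dist p₂ p₃ ∈ Set.Icc (2.51 : ℝ) (2 * Real.sqrt 2) ∧ dist p₁ p₃ ∈ Set.Icc (2.51 : ℝ) (2 * Real.sqrt 2) ∧ dist p₁ p₂ ∈ Set.Icc (2.51 : ℝ) (2 * Real.sqrt 2) ∧ dist p₀ p₁ ∈ Set.Icc (2 : ℝ) (2.51) ∧ dist p₀ p₂ ∈ Set.Icc (2 : ℝ) (2.51) ∧ dist p₀ p₃ ∈ Set.Icc (2 : ℝ) (2.51))) :
    vor p₀ p₁ p₂ p₃ < 0 := by
  have hsqrt : (2.51 : ℝ) ≤ 2 * √2 := by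
    nlinarith [Real.sqrt_nonneg 2, Real.sq_sqrt (zero_le_two (α := ℝ))]
  have hshort {y : ℝ} (h : y ∈ Set.Icc (2 : ℝ) 2.51) : y ∈ Set.Icc 2 (2 * √2) :=
    ⟨h.1, h.2.trans hsqrt⟩
  have hlong {y : ℝ} (h : y ∈ Set.Icc (2.51 : ℝ) (2 * √2)) : y ∈ Set.Icc 2 (2 * √2) :=
    ⟨by linarith [h.1], h.2⟩
  rcases hcase with ⟨h₀₁, h₁₃, h₀₂, h₀₃, h₂₃, h₁₂⟩ | ⟨h₀₁, h₁₃, h₁₂, h₀₂, h₀₃, h₂₃⟩ |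
    ⟨h₂₃, h₁₃, h₀₁, h₀₂, h₀₃, h₁₂⟩ | ⟨h₂₃, h₁₃, h₁₂, h₀₁, h₀₂, h₀₃⟩
  · exact vor_neg_several_long_edges_general p₀ p₁ p₂ p₃ hindep hcc (hlong h₀₁) (hshort h₀₂)
      (hshort h₀₃) (hshort h₁₂) (hlong h₁₃) (hshort h₂₃) h₁₃.1 (by simp [h₀₁.1])
  · exact vor_neg_several_long_edges_general p₀ p₁ p₂ p₃ hindep hcc (hlong h₀₁) (hshort h₀₂)
      (hshort h₀₃) (hlong h₁₂) (hlong h₁₃) (hshort h₂₃) h₁₃.1 (by simp [h₀₁.1])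
  · exact vor_neg_several_long_edges_general p₀ p₁ p₂ p₃ hindep hcc (hshort h₀₁) (hshort h₀₂)
      (hshort h₀₃) (hshort h₁₂) (hlong h₁₃) (hlong h₂₃) h₁₃.1 (by simp [h₂₃.1])
  · exact vor_neg_several_long_edges_general p₀ p₁ p₂ p₃ hindep hcc (hshort h₀₁) (hshort h₀₂)
      (hshort h₀₃) (hlong h₁₂) (hlong h₁₃) (hlong h₂₃) h₁₃.1 (by simp [h₂₃.1])
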